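/- arXiv:1405.2411 — 2 statements merged into one kernel-verified Lean document; each statement's English description precedes it below -/
import Mathlib

section
/- Assume Var_n/n → ∞ as n → ∞. Let α ∈ (1,2), let h be slowly varying at infinity, and set d_α := α(α−1)/(2·Γ(3−α)). Then Var_n ~ n^α h(n) as n → ∞ if and only if ν((1−x,1]) ~ d_α·x^{2−α}·h(1/x) as x → 0⁺. -/
open MeasureTheory Filter Topology Set

/-- A function `h : (0,∞) → (0,∞)` is slowly varying at infinity: positive and
continuous on `(0,∞)` with `h(st)/h(t) → 1` as `t → ∞` for every `s > 0`. -/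
def SlowlyVaryingAtTop (h : ℝ → ℝ) : Prop :=
  (∀ t > 0, 0 < h t) ∧ ContinuousOn h (Set.Ioi 0) ∧
    ∀ s > 0, Tendsto (fun t => h (s * t) / h t) atTop (𝓝 1)

/-- The variance sequence `Var_n = ∫ (n + 2 ∑_{k=1}^{n-1} (n-k) λ^k) ν(dλ)`. -/
noncomputable def VarSeqR (ν : Measure ℝ) (n : ℕ) : ℝ :=
  ∫ l, ((n : ℝ) + 2 * ∑ k ∈ Finset.Ico 1 n, ((n : ℝ) - (k : ℝ)) * l ^ k) ∂ν


/-! ### Basic objects -/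

noncomputable def Ftl (ν : Measure ℝ) (x : ℝ) : ℝ := (ν (Set.Ioc (1 - x) 1)).toReal

noncomputable def cpos (ν : Measure ℝ) (m : ℕ) : ℝ := ∫ l in Set.Ioc (0:ℝ) 1, l ^ m ∂ν

noncomputable def Sgeo (n : ℕ) (l : ℝ) : ℝ := ∑ i ∈ Finset.range n, l ^ i

noncomputable def Gker (n : ℕ) (l : ℝ) : ℝ :=
  (n : ℝ) + 2 * ∑ k ∈ Finset.Ico 1 n, ((n : ℝ) - (k : ℝ)) * l ^ k

lemma Gker_succ (n : ℕ) (l : ℝ) : Gker (n+1) l = Gker n l + 1 + 2 * (Sgeo (n+1) l - 1) := by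
  unfold Gker Sgeo
  rcases Nat.eq_zero_or_pos n with rfl | hn
  · simp
  have e : Finset.range (n+1) = insert 0 (Finset.Ico 1 (n+1)) := by
    ext i; simp; omega
  rw [e, Finset.sum_insert (by simp), Finset.sum_Ico_succ_top (by omega),
    Finset.sum_Ico_succ_top (by omega)]
  have : ∑ k ∈ Finset.Ico 1 n, (((n+1:ℕ) : ℝ) - (k : ℝ)) * l ^ k
      = ∑ k ∈ Finset.Ico 1 n, ((n : ℝ) - (k : ℝ)) * l ^ k + ∑ k ∈ Finset.Ico 1 n, l ^ k := by
    rw [← Finset.sum_add_distrib]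
    refine Finset.sum_congr rfl fun k _ => ?_
    push_cast; ring
  rw [this]; push_cast; ring

lemma Sgeo_mul (n : ℕ) (l : ℝ) : Sgeo n l * (l - 1) = l ^ n - 1 := geom_sum_mul l n

lemma Gker_closed (n : ℕ) (l : ℝ) :
    (1 - l) ^ 2 * Gker n l = n * (1 - l ^ 2) - 2 * l * (1 - l ^ n) := by
  induction n with
  | zero => simp [Gker]
  | succ n ih =>
    rw [Gker_succ]
    have := Sgeo_mul (n+1) l
    push_cast
    have e : (1 - l) ^ 2 * (Gker n l + 1 + 2 * (Sgeo (n+1) l - 1)) =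
      (1 - l) ^ 2 * Gker n l - (1-l)^2 - 2 * (1 - l) * (Sgeo (n+1) l * (l - 1)) := by ring
    rw [e, ih, this]; ring

lemma Gker_one (n : ℕ) : Gker n 1 = (n:ℝ) ^ 2 := by
  induction n with
  | zero => simp [Gker]
  | succ n ih =>
    rw [Gker_succ, ih]; simp [Sgeo]; ring

lemma Gker_second_diff (n k : ℕ) (l : ℝ) :
    Gker ((k+2)*n) l - 2 * Gker ((k+1)*n) l + Gker (k*n) l
      = 2 * l ^ (k*n+1) * (Sgeo n l)^2 := by
  by_cases hl : l = 1
  · subst hl; simp only [Gker_one]; simp [Sgeo]; ring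
  have h1 : (1 - l)^2 ≠ 0 := by
    have : 1 - l ≠ 0 := fun h => hl (by linarith)
    positivity
  apply mul_left_cancel₀ h1
  have e1 : (1-l)^2 * (2 * l ^ (k*n+1) * (Sgeo n l)^2)
      = 2 * l ^ (k*n+1) * (Sgeo n l * (l-1))^2 := by ring
  rw [e1, Sgeo_mul, mul_add, mul_sub, mul_left_comm _ (2:ℝ), Gker_closed, Gker_closed, Gker_closed]
  push_cast
  have : l ^ ((k+2)*n) = l^(k*n) * (l^n)^2 := by rw [← pow_mul, ← pow_add]; ring_nf
  rw [this]
  have : l ^ ((k+1)*n) = l^(k*n) * (l^n) := by rw [← pow_add]; ring_nf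
  rw [this]
  ring

lemma Gker_neg_bound (n : ℕ) (l : ℝ) (h1 : -1 ≤ l) (h0 : l ≤ 0) : |Gker n l| ≤ 5 * (n:ℝ) := by
  rcases Nat.eq_zero_or_pos n with rfl | hn
  · simp [Gker]
  have hn' : (1:ℝ) ≤ n := by exact_mod_cast hn
  have h2 : |l| ≤ 1 := abs_le.2 ⟨h1, by linarith⟩
  have h3 : |l^n| ≤ 1 := by rw [abs_pow]; exact pow_le_one₀ (abs_nonneg _) h2
  have h4 := abs_le.1 h3
  have h5 : |(1 - l) ^ 2 * Gker n l| ≤ 5 * (n:ℝ) := by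
    rw [Gker_closed, abs_le]
    have hl2 : 0 ≤ l^2 ∧ l^2 ≤ 1 := ⟨by positivity, by nlinarith⟩
    constructor <;> nlinarith [mul_nonneg (by linarith : (0:ℝ) ≤ n) hl2.1, mul_nonneg (by linarith : (0:ℝ) ≤ n) (sub_nonneg.2 hl2.2)]
  rw [abs_mul, abs_of_nonneg (by positivity : 0 ≤ (1-l)^2)] at h5
  have h6 : 1 ≤ (1-l)^2 := by nlinarith
  nlinarith [abs_nonneg (Gker n l)]

lemma Gker_cont (n : ℕ) : Continuous (Gker n) := by unfold Gker; fun_prop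
lemma Sgeo_cont (n : ℕ) : Continuous (Sgeo n) := by unfold Sgeo; fun_prop

lemma VarSeqR_eq (ν : Measure ℝ) (n : ℕ) : VarSeqR ν n = ∫ l, Gker n l ∂ν := rfl

/-- continuous functions are integrable against a finite measure on `[-1,1]`. -/
lemma integrable_of_supp (ν : Measure ℝ) [IsFiniteMeasure ν]
    (hsupp : ν (Set.Icc (-1 : ℝ) 1)ᶜ = 0) {f : ℝ → ℝ} (hf : Continuous f) : Integrable f ν := by
  obtain ⟨C, hC⟩ := isCompact_Icc.exists_bound_of_continuousOn (s := Set.Icc (-1:ℝ) 1) hf.continuousOn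
  refine Integrable.of_bound hf.aestronglyMeasurable C ?_
  have : ∀ᵐ x ∂ν, x ∈ Set.Icc (-1:ℝ) 1 := by rw [ae_iff]; exact hsupp
  filter_upwards [this] with x hx using hC x hx

/-- split of an integral at zero -/
lemma integral_split (ν : Measure ℝ) [IsFiniteMeasure ν]
    (hsupp : ν (Set.Icc (-1 : ℝ) 1)ᶜ = 0) {f : ℝ → ℝ} (hf : Continuous f) :
    ∫ l, f l ∂ν = (∫ l in Set.Icc (-1:ℝ) 0, f l ∂ν) + ∫ l in Set.Ioc (0:ℝ) 1, f l ∂ν := by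
  have hi := integrable_of_supp ν hsupp hf
  rw [← setIntegral_union (by
      rw [Set.disjoint_left]; intro x hx hx'; exact absurd hx.2 (not_le.2 hx'.1)) measurableSet_Ioc
      hi.integrableOn hi.integrableOn, Set.Icc_union_Ioc_eq_Icc (by norm_num) (by norm_num)]
  rw [setIntegral_eq_integral_of_ae_compl_eq_zero]
  have : ∀ᵐ x ∂ν, x ∈ Set.Icc (-1:ℝ) 1 := by rw [ae_iff]; exact hsupp
  filter_upwards [this] with x hx hx' using absurd hx hx'

lemma setIntegral_neg_bound (ν : Measure ℝ) [IsFiniteMeasure ν] {f : ℝ → ℝ} (C : ℝ)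
    (hC : ∀ l, -1 ≤ l → l ≤ 0 → |f l| ≤ C) :
    |∫ l in Set.Icc (-1:ℝ) 0, f l ∂ν| ≤ C * ν.real (Set.Icc (-1:ℝ) 0) := by
  rw [← Real.norm_eq_abs]
  exact norm_setIntegral_le_of_norm_le_const (measure_lt_top _ _) fun x hx => hC x hx.1 hx.2

/-! ### Uniform convergence for slowly varying functions -/

lemma sv_local_uniform (f : ℝ → ℝ) (hf : Continuous f)
    (hlim : ∀ u, Tendsto (fun x => f (x + u) - f x) atTop (𝓝 0)) (ε : ℝ) (hε : 0 < ε) :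
    ∃ δ > 0, ∃ X, ∀ x ≥ X, ∀ u, 0 ≤ u → u ≤ δ → |f (x+u) - f x| ≤ ε := by
  let E : ℕ → Set ℝ := fun N => {u | ∀ x ≥ (N:ℝ), |f (x+u) - f x| ≤ ε/2}
  have hE : ∀ N, IsClosed (E N) := by
    intro N
    have : E N = ⋂ x ≥ (N:ℝ), {u | |f (x+u) - f x| ≤ ε/2} := by
      ext u; simp [E]
    rw [this]
    exact isClosed_biInter fun x _ => isClosed_le (by fun_prop) continuous_const
  have hU : ⋃ N, E N = Set.univ := by
    rw [Set.eq_univ_iff_forall]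
    intro u
    have := (Metric.tendsto_nhds.1 (hlim u)) (ε/2) (by positivity)
    obtain ⟨X, hX⟩ := eventually_atTop.1 this
    obtain ⟨N, hN⟩ := exists_nat_ge X
    refine Set.mem_iUnion.2 ⟨N, fun x hx => ?_⟩
    have := hX x (hN.trans hx)
    rw [Real.dist_eq, sub_zero] at this
    exact this.le
  obtain ⟨N, a, ha⟩ := nonempty_interior_of_iUnion_of_closed hE hU
  obtain ⟨δ, hδ, hb⟩ := Metric.isOpen_iff.1 isOpen_interior a ha
  have haE : a ∈ E N := interior_subset ha
  refine ⟨δ/2, by positivity, N + a, fun x hx u hu0 hu => ?_⟩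
  have h1 : a + u ∈ E N := interior_subset (hb (by
    rw [Metric.mem_ball, Real.dist_eq, add_sub_cancel_left, abs_of_nonneg hu0]; linarith))
  have h2 := h1 (x - a) (by linarith)
  have h3 := haE (x - a) (by linarith)
  rw [show x - a + (a + u) = x + u by ring] at h2
  rw [show x - a + a = x by ring] at h3
  rw [abs_le] at *
  constructor <;> linarith [h2.1, h2.2, h3.1, h3.2]

lemma sv_ratio (h : ℝ → ℝ) (hh : SlowlyVaryingAtTop h) (v w : ℝ → ℝ)
    (hw : Tendsto w atTop atTop) (hvw : Tendsto (fun t => v t / w t) atTop (𝓝 1)) :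
    Tendsto (fun t => h (v t) / h (w t)) atTop (𝓝 1) := by
  obtain ⟨hpos, hcont, hsv⟩ := hh
  let f : ℝ → ℝ := fun x => Real.log (h (Real.exp x))
  have hf : Continuous f := by
    refine Continuous.log ?_ fun x => (hpos _ (Real.exp_pos x)).ne'
    exact hcont.comp_continuous Real.continuous_exp fun x => Real.exp_pos x
  have hlim : ∀ u, Tendsto (fun x => f (x + u) - f x) atTop (𝓝 0) := by
    intro u
    have h1 := ((hsv (Real.exp u) (Real.exp_pos u)).comp Real.tendsto_exp_atTop).log one_ne_zero
    rw [Real.log_one] at h1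
    refine h1.congr fun x => ?_
    simp only [Function.comp, f]
    rw [Real.log_div (hpos _ (by positivity)).ne' (hpos _ (by positivity)).ne', ← Real.exp_add, add_comm u]
  -- log version
  have hv : ∀ᶠ t in atTop, 0 < w t ∧ 0 < v t := by
    filter_upwards [hw.eventually_gt_atTop 0, hvw.eventually (lt_mem_nhds zero_lt_one)] with t h1 h2
    exact ⟨h1, by simpa [h1.ne'] using mul_pos h2 h1⟩
  have key : Tendsto (fun t => f (Real.log (v t)) - f (Real.log (w t))) atTop (𝓝 0) := by
    rw [Metric.tendsto_nhds]
    intro ε hε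
    obtain ⟨δ, hδ, X, hX⟩ := sv_local_uniform f hf hlim (ε/2) (by positivity)
    have hl := (Metric.tendsto_nhds.1 (hvw.log one_ne_zero)) δ hδ
    have hwl := (Real.tendsto_log_atTop.comp hw).eventually_ge_atTop (X + δ)
    filter_upwards [hv, hl, hwl] with t ⟨h1, h2⟩ h3 h4
    rw [Real.log_one, Real.dist_eq, sub_zero, Real.log_div h2.ne' h1.ne', abs_lt] at h3
    rw [Real.dist_eq, sub_zero]
    simp only [Function.comp] at h4
    rcases le_total (Real.log (w t)) (Real.log (v t)) with hc | hc
    · have := hX (Real.log (w t)) (by linarith) (Real.log (v t) - Real.log (w t)) (by linarith) (by linarith)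
      rw [add_sub_cancel] at this; linarith
    · have := hX (Real.log (v t)) (by linarith) (Real.log (w t) - Real.log (v t)) (by linarith) (by linarith)
      rw [add_sub_cancel, abs_sub_comm] at this; linarith
  have := (Real.continuous_exp.tendsto 0).comp key
  rw [Real.exp_zero] at this
  refine this.congr' ?_
  filter_upwards [hv] with t ⟨h1, h2⟩
  simp only [Function.comp, f, Real.exp_log h1, Real.exp_log h2]
  rw [Real.exp_sub, Real.exp_log (hpos _ h1), Real.exp_log (hpos _ h2)]

/-! ### Tail function, Potter bound -/

lemma Ftl_mono (ν : Measure ℝ) [IsFiniteMeasure ν] : Monotone (Ftl ν) := by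
  intro x y hxy
  exact ENNReal.toReal_mono (measure_ne_top _ _)
    (measure_mono (Set.Ioc_subset_Ioc_left (by linarith)))

lemma Ftl_nonneg (ν : Measure ℝ) (x : ℝ) : 0 ≤ Ftl ν x := ENNReal.toReal_nonneg

lemma potter_aux (F : ℝ → ℝ) (hmono : Monotone F) (hnn : ∀ x, 0 ≤ F x) (β q : ℝ) (hq0 : 0 < q)
    (hβ : β < q)
    (hratio : Tendsto (fun x => F (2 * x) / F x) (𝓝[>] 0) (𝓝 ((2:ℝ) ^ β)))
    (hpos : ∀ᶠ x in 𝓝[>] (0:ℝ), 0 < F x) :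
    ∃ C > 0, ∃ δ > 0, δ ≤ 1 ∧ ∀ x z, 0 < x → x ≤ δ → x ≤ z → z ≤ 1 → F z ≤ C * (z / x) ^ q * F x := by
  have h2 : (2:ℝ) ^ β < 2 ^ q := Real.rpow_lt_rpow_of_exponent_lt (by norm_num) hβ
  have hev := hpos.and (hratio.eventually (gt_mem_nhds h2))
  obtain ⟨δ0, hδ0, hδ⟩ := (mem_nhdsGT_iff_exists_Ioo_subset).1 hev
  have hδ0 : 0 < δ0 := hδ0
  set δ1 := min δ0 1 with hδ1
  have hδ1p : 0 < δ1 := lt_min hδ0 one_pos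
  have hst : ∀ x, 0 < x → x < δ1 → 0 < F x ∧ F (2*x) ≤ 2 ^ q * F x := by
    intro x hx hx'
    have := hδ (⟨hx, hx'.trans_le (min_le_left _ _)⟩ : x ∈ Set.Ioo 0 δ0)
    refine ⟨this.1, ?_⟩
    have h3 := this.2
    exact ((div_lt_iff₀ this.1).1 h3).le
  have h2q : (0:ℝ) < 2 ^ q := by positivity
  have iter : ∀ j : ℕ, ∀ x, 0 < x → 2 ^ j * x ≤ δ1 → F (2 ^ j * x) ≤ ((2:ℝ) ^ q) ^ j * F x := by
    intro j
    induction j with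
    | zero => intro x _ _; simp
    | succ j ih =>
      intro x hx hle
      have hp : 0 < 2 ^ j * x := by positivity
      have e : (2:ℝ) ^ (j+1) * x = 2 * (2 ^ j * x) := by ring
      rw [e] at hle ⊢
      have h3 := (hst _ hp (by linarith)).2
      have h4 := ih x hx (by linarith)
      calc _ ≤ _ := h3
        _ ≤ 2 ^ q * (((2:ℝ) ^ q) ^ j * F x) := by gcongr
        _ = _ := by ring
  have small : ∀ x z, 0 < x → x ≤ z → z ≤ δ1/2 → F z ≤ 2 ^ q * (z / x) ^ q * F x := by
    intro x z hx hxz hz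
    obtain ⟨j, hj1, hj2⟩ := exists_nat_pow_near (one_le_div hx |>.2 hxz) (by norm_num : (1:ℝ) < 2)
    rw [le_div_iff₀ hx] at hj1
    have hj2' := (div_lt_iff₀ hx).1 hj2
    have h5 := iter (j+1) x hx (by rw [pow_succ]; linarith)
    calc F z ≤ F (2 ^ (j+1) * x) := hmono hj2'.le
      _ ≤ _ := h5
      _ = 2 ^ q * ((2:ℝ) ^ j) ^ q * F x := by
        rw [pow_succ, ← Real.rpow_mul_natCast (by norm_num), ← Real.rpow_natCast 2 j,
          ← Real.rpow_mul (by norm_num)]; ring_nf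
      _ ≤ _ := by
        have := hnn x
        have : (2:ℝ) ^ j ≤ z / x := (le_div_iff₀ hx).2 hj1
        gcongr
  have hFδ := (hst (δ1/2) (by positivity) (by linarith)).1
  refine ⟨2 ^ q * (1 + F 1 / F (δ1/2)), ?_, δ1/2, by positivity, ?_, ?_⟩
  · have := hnn 1; positivity
  · have : δ1 ≤ 1 := min_le_right _ _
    linarith
  intro x z hx hxδ hxz hz
  have hF1 := hnn 1
  have hFx := hnn x
  have hz0 : 0 < z := by linarith
  rcases le_total z (δ1/2) with hc | hc
  · refine (small x z hx hxz hc).trans ?_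
    have : (1:ℝ) ≤ 1 + F 1 / F (δ1/2) := by
      have : 0 ≤ F 1 / F (δ1/2) := by positivity
      linarith
    have h6 : 0 ≤ 2 ^ q * (z / x) ^ q * F x := by positivity
    nlinarith
  · have h7 := small x (δ1/2) hx hxδ le_rfl
    have h8 : (δ1/2/x) ^ q ≤ (z/x) ^ q := by gcongr
    calc F z ≤ F 1 := hmono hz
      _ = F 1 / F (δ1/2) * F (δ1/2) := by field_simp
      _ ≤ F 1 / F (δ1/2) * (2 ^ q * (δ1/2/x) ^ q * F x) := by gcongr
      _ ≤ F 1 / F (δ1/2) * (2 ^ q * (z/x) ^ q * F x) := by gcongr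
      _ ≤ _ := by
        have h6 : 0 ≤ 2 ^ q * (z / x) ^ q * F x := by positivity
        nlinarith

/-! ### The covariance formula -/

lemma cpos_eq (ν : Measure ℝ) [IsFiniteMeasure ν] (m : ℕ) :
    cpos ν (m+1) = ∫ s in Set.Ioc (0:ℝ) 1, (m+1) * s ^ m * Ftl ν (1 - s) := by
  have h1 : ∀ l ∈ Set.Ioc (0:ℝ) 1, l ^ (m+1)
      = ∫ s in Set.Ioc (0:ℝ) 1, (Set.Iio l).indicator (fun s => ((m:ℝ)+1) * s ^ m) s := by
    intro l hl
    rw [setIntegral_indicator measurableSet_Iio]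
    have e : Set.Ioc (0:ℝ) 1 ∩ Set.Iio l = Set.Ioo 0 l := by
      ext x; simp only [Set.mem_inter_iff, Set.mem_Ioc, Set.mem_Iio, Set.mem_Ioo]
      exact ⟨fun h => ⟨h.1.1, h.2⟩, fun h => ⟨⟨h.1, h.2.le.trans hl.2⟩, h.2⟩⟩
    rw [e, ← integral_Ioc_eq_integral_Ioo, ← intervalIntegral.integral_of_le hl.1.le,
      intervalIntegral.integral_const_mul, integral_pow]
    have : (m:ℝ)+1 ≠ 0 := by positivity
    field_simp; simp
  unfold cpos
  rw [setIntegral_congr_fun measurableSet_Ioc h1]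
  rw [integral_integral_swap]
  · refine setIntegral_congr_fun measurableSet_Ioc fun s hs => ?_
    have : ∀ l, (Set.Iio l).indicator (fun s => ((m:ℝ)+1) * s ^ m) s
        = (Set.Ioi s).indicator (fun _ => ((m:ℝ)+1) * s ^ m) l := by
      intro l; simp [Set.indicator]
    simp only [this]
    rw [setIntegral_indicator measurableSet_Ioi]
    have e : Set.Ioc (0:ℝ) 1 ∩ Set.Ioi s = Set.Ioc s 1 := by
      ext x; simp only [Set.mem_inter_iff, Set.mem_Ioc, Set.mem_Ioi]
      exact ⟨fun h => ⟨h.2, h.1.2⟩, fun h => ⟨⟨hs.1.trans h.1, h.2⟩, h.1⟩⟩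
    rw [e, setIntegral_const, smul_eq_mul, mul_comm]
    simp [Ftl, Measure.real]
  · have hm : Measurable (Function.uncurry fun (l s : ℝ) =>
        (Set.Iio l).indicator (fun s => ((m:ℝ)+1) * s ^ m) s) := by
      have : (Function.uncurry fun (l s : ℝ) =>
        (Set.Iio l).indicator (fun s => ((m:ℝ)+1) * s ^ m) s)
        = {p : ℝ × ℝ | p.2 < p.1}.indicator (fun p => ((m:ℝ)+1) * p.2 ^ m) := by
        ext p; simp [Set.indicator, Function.uncurry]
      rw [this]
      exact Measurable.indicator (by fun_prop) (measurableSet_lt measurable_snd measurable_fst)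
    refine Integrable.of_bound hm.aestronglyMeasurable ((m:ℝ)+1) ?_
    rw [Measure.prod_restrict]
    filter_upwards [ae_restrict_mem (measurableSet_Ioc.prod measurableSet_Ioc)] with p hp
    simp only [Function.uncurry, Set.indicator]
    split_ifs
    · rw [Real.norm_eq_abs, abs_of_nonneg (mul_nonneg (by positivity) (pow_nonneg hp.2.1.le _))]
      have := pow_le_one₀ (n := m) hp.2.1.le hp.2.2
      nlinarith [(by positivity : (0:ℝ) ≤ m + 1)]
    · simp; positivity

lemma cpos_eq' (ν : Measure ℝ) [IsFiniteMeasure ν] (m n : ℕ) (hn : 0 < n) :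
    cpos ν (m+1) = ((m+1:ℕ):ℝ) / n * ∫ y in Set.Ioi (0:ℝ),
      (Set.Ioc (0:ℝ) n).indicator (fun y => (1 - y / n) ^ m * Ftl ν (y / n)) y := by
  have hn' : (0:ℝ) < n := by exact_mod_cast hn
  rw [cpos_eq, setIntegral_indicator measurableSet_Ioc,
    Set.inter_eq_self_of_subset_right Set.Ioc_subset_Ioi_self,
    ← intervalIntegral.integral_of_le zero_le_one, ← intervalIntegral.integral_of_le hn'.le]
  have := intervalIntegral.integral_comp_sub_div (a := 0) (b := n)
    (fun s => ((m:ℝ)+1) * s ^ m * Ftl ν (1 - s)) hn'.ne' 1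
  rw [div_self hn'.ne', sub_self, zero_div, sub_zero, smul_eq_mul] at this
  simp only [sub_sub_cancel] at this
  have e : ∫ x in (0:ℝ)..1, ((m:ℝ)+1) * x ^ m * Ftl ν (1 - x)
      = (1/(n:ℝ)) * ∫ x in (0:ℝ)..n, ((m:ℝ)+1) * (1 - x/n) ^ m * Ftl ν (x/n) := by
    rw [this]; field_simp
  rw [e]
  simp only [mul_assoc]
  rw [intervalIntegral.integral_const_mul]
  push_cast; ring

/-! ### Abelian direction -/

lemma bnd_integrable (q ρ : ℝ) (hq : 0 < q) (hρ : 0 < ρ) :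
    IntegrableOn (fun y : ℝ => (1 + y ^ q) * Real.exp (-(ρ * y))) (Set.Ioi 0) := by
  have h1 := integrableOn_rpow_mul_exp_neg_mul_rpow (s := 0) (p := 1) (by norm_num) one_pos hρ
  have h2 := integrableOn_rpow_mul_exp_neg_mul_rpow (s := q) (p := 1) (by linarith) one_pos hρ
  refine (h1.add h2).congr_fun (fun y _ => ?_) measurableSet_Ioi
  simp [add_mul]

lemma bnd_integral (q ρ : ℝ) (hq : 0 < q) (hρ : 0 < ρ) :
    ∫ y in Set.Ioi (0:ℝ), (1 + y ^ q) * Real.exp (-(ρ * y))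
      = 1 / ρ + (1/ρ) ^ (q+1) * Real.Gamma (q+1) := by
  have h1 := integrableOn_rpow_mul_exp_neg_mul_rpow (s := 0) (p := 1) (by norm_num) one_pos hρ
  have h2 := integrableOn_rpow_mul_exp_neg_mul_rpow (s := q) (p := 1) (by linarith) one_pos hρ
  have i1 := Real.integral_rpow_mul_exp_neg_mul_Ioi (a := 1) (r := ρ) one_pos hρ
  have i2 := Real.integral_rpow_mul_exp_neg_mul_Ioi (a := q+1) (r := ρ) (by linarith) hρ
  simp only [sub_self, Real.rpow_zero, one_mul, Real.rpow_one, Real.Gamma_one, mul_one,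
    add_sub_cancel_right] at i1 i2
  simp only [Real.rpow_zero, Real.rpow_one, one_mul, neg_mul] at h1 h2
  simp only [add_mul, one_mul]
  rw [integral_add h1 h2, i1, i2]

lemma pow_exp_bound (m n : ℕ) (hn : 0 < n) (y : ℝ) (hy : y ≤ n) :
    0 ≤ (1 - y / n) ^ m ∧
    (1 - y / n) ^ m ≤ Real.exp 1 * Real.exp (-(((m+1:ℕ):ℝ) / n * y)) := by
  have hn' : (0:ℝ) < n := by exact_mod_cast hn
  have h1 : y / n ≤ 1 := (div_le_one hn').2 hy
  have h2 : 0 ≤ 1 - y / n := by linarith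
  refine ⟨by positivity, ?_⟩
  calc (1 - y / n) ^ m ≤ (Real.exp (-(y/n))) ^ m := by
        gcongr; linarith [Real.add_one_le_exp (-(y/n))]
    _ = Real.exp (m * (-(y/n))) := by rw [Real.exp_nat_mul]
    _ ≤ Real.exp (1 + -(((m+1:ℕ):ℝ) / n * y)) := by
        gcongr; push_cast
        have : ((m:ℝ)+1)/n * y = m * (y/n) + y/n := by ring
        rw [this]; linarith
    _ = _ := Real.exp_add _ _

lemma Ftl_meas (ν : Measure ℝ) [IsFiniteMeasure ν] : Measurable (Ftl ν) := (Ftl_mono ν).measurable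

lemma ind_meas (ν : Measure ℝ) [IsFiniteMeasure ν] (m n : ℕ) : Measurable
    ((Set.Ioc (0:ℝ) n).indicator (fun y => (1 - y / n) ^ m * Ftl ν (y / n))) := by
  refine Measurable.indicator ?_ measurableSet_Ioc
  have := Ftl_meas ν
  fun_prop

lemma ind_bound (ν : Measure ℝ) (m n : ℕ) (hn : 0 < n) (C q a : ℝ)
    (hP : ∀ y : ℝ, 0 < y → y ≤ n → Ftl ν (y / n) ≤ C * (1 + y ^ q) * a) (y : ℝ) (hy : 0 < y)
    (hC : 0 ≤ C) (ha : 0 < a) :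
    ‖(Set.Ioc (0:ℝ) n).indicator (fun y => (1 - y / n) ^ m * Ftl ν (y / n)) y‖ ≤
      C * a * Real.exp 1 * ((1 + y ^ q) * Real.exp (-(((m+1:ℕ):ℝ) / n * y))) := by
  have hyq : 0 ≤ y ^ q := by positivity
  by_cases hyn : y ≤ n
  · have hmem : y ∈ Set.Ioc (0:ℝ) n := ⟨hy, hyn⟩
    rw [Set.indicator_of_mem hmem]
    obtain ⟨h1, h2⟩ := pow_exp_bound m n hn y hyn
    have h3 := Ftl_nonneg ν (y/n)
    rw [Real.norm_eq_abs, abs_of_nonneg (by positivity)]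
    calc _ ≤ (Real.exp 1 * Real.exp (-(((m+1:ℕ):ℝ) / n * y))) * (C * (1 + y ^ q) * a) := by
          gcongr; exact hP y hy hyn
      _ = _ := by ring
  · rw [Set.indicator_of_notMem (fun h => hyn h.2)]
    simp only [norm_zero]; positivity

lemma cpos_dom (ν : Measure ℝ) [IsFiniteMeasure ν] (m n : ℕ) (hn : 0 < n) (hmn : m + 1 ≤ n)
    (C q a : ℝ) (hq : 0 < q) (hC : 0 ≤ C) (ha : 0 < a)
    (hP : ∀ y : ℝ, 0 < y → y ≤ n → Ftl ν (y / n) ≤ C * (1 + y ^ q) * a) :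
    cpos ν (m+1) / a ≤ C * Real.exp 1 * (1 + Real.Gamma (q+1)) * (((m+1:ℕ):ℝ) / n) ^ (-q) := by
  have hn' : (0:ℝ) < n := by exact_mod_cast hn
  rw [cpos_eq' ν m n hn]
  set ρ : ℝ := ((m+1:ℕ):ℝ) / n with hρ
  have hρ0 : 0 < ρ := by rw [hρ]; positivity
  have hρ1 : ρ ≤ 1 := by rw [hρ, div_le_one hn']; exact_mod_cast hmn
  have hG : 0 < Real.Gamma (q+1) := Real.Gamma_pos_of_pos (by linarith)
  have h1 : ∫ y in Set.Ioi (0:ℝ),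
      (Set.Ioc (0:ℝ) n).indicator (fun y => (1 - y / n) ^ m * Ftl ν (y / n)) y ≤
      C * a * Real.exp 1 * (1 / ρ + (1/ρ) ^ (q+1) * Real.Gamma (q+1)) := by
    rw [← bnd_integral q ρ hq hρ0, ← integral_const_mul]
    refine (le_abs_self _).trans ?_
    rw [← Real.norm_eq_abs]
    refine norm_integral_le_of_norm_le ((bnd_integrable q ρ hq hρ0).const_mul _) ?_
    filter_upwards [ae_restrict_mem measurableSet_Ioi] with y hy
    exact ind_bound ν m n hn C q a hP y hy hC ha
  rw [div_le_iff₀ ha]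
  have h2 : (1:ℝ) ≤ ρ ^ (-q) := Real.one_le_rpow_of_pos_of_le_one_of_nonpos hρ0 hρ1 (by linarith)
  have h3 : ρ * (1/ρ) ^ (q+1) = ρ ^ (-q) := by
    rw [one_div, Real.inv_rpow hρ0.le, Real.rpow_add hρ0, Real.rpow_neg hρ0.le, Real.rpow_one]
    field_simp
  calc _ ≤ ρ * (C * a * Real.exp 1 * (1 / ρ + (1/ρ) ^ (q+1) * Real.Gamma (q+1))) := by gcongr
    _ = C * a * Real.exp 1 * (1 + (ρ * (1/ρ) ^ (q+1)) * Real.Gamma (q+1)) := by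
        field_simp
    _ ≤ C * a * Real.exp 1 * (ρ ^ (-q) + ρ ^ (-q) * Real.Gamma (q+1)) := by rw [h3]; gcongr
    _ = _ := by ring

lemma pow_lim (m : ℕ → ℕ) (r y : ℝ)
    (hm : Tendsto (fun n : ℕ => (m n : ℝ) / n) atTop (𝓝 r)) :
    Tendsto (fun n : ℕ => (1 - y / n) ^ (m n)) atTop (𝓝 (Real.exp (-(r * y)))) := by
  have h1 := (Real.tendsto_mul_log_one_add_div_atTop (-y)).comp tendsto_natCast_atTop_atTop
  have h2 := (Real.continuous_exp.tendsto _).comp (hm.mul h1)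
  rw [mul_neg] at h2
  refine h2.congr' ?_
  filter_upwards [eventually_gt_atTop ⌈|y|⌉₊, eventually_gt_atTop 0] with n hn hn0
  have hn' : |y| < n := Nat.lt_of_ceil_lt hn
  have hn0' : (0:ℝ) < n := by exact_mod_cast hn0
  have h3 : 0 < 1 + -y / n := by
    have : y / n < 1 := (div_lt_one hn0').2 (lt_of_abs_lt hn')
    rw [neg_div]; linarith
  simp only [Function.comp]
  rw [show (m n:ℝ)/n * (n * Real.log (1 + -y/n)) = m n * Real.log (1 + -y/n) by field_simp,
    Real.exp_nat_mul, Real.exp_log h3]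
  congr 1; ring

lemma cpos_lim (ν : Measure ℝ) [IsFiniteMeasure ν] (a : ℕ → ℝ) (α d : ℝ) (hα : α < 2)
    (hF : ∀ y > 0, Tendsto (fun n : ℕ => Ftl ν (y / n) / a n) atTop (𝓝 (d * y ^ (2 - α))))
    (C q : ℝ) (hq : 0 < q) (hC : 0 ≤ C) (ha : ∀ n ≥ 1, 0 < a n)
    (hP : ∀ᶠ n : ℕ in atTop, ∀ y : ℝ, 0 < y → y ≤ n → Ftl ν (y / n) ≤ C * (1 + y ^ q) * a n)
    (m : ℕ → ℕ) (r : ℝ) (hr : 0 < r)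
    (hm : Tendsto (fun n : ℕ => (m n : ℝ) / n) atTop (𝓝 r)) :
    Tendsto (fun n => cpos ν (m n + 1) / a n) atTop
      (𝓝 (d * Real.Gamma (3 - α) * r ^ (α - 2))) := by
  have hm1 : Tendsto (fun n : ℕ => ((m n + 1 : ℕ) : ℝ) / n) atTop (𝓝 r) := by
    have := hm.add (tendsto_const_div_atTop_nhds_zero_nat 1)
    rw [add_zero] at this
    refine this.congr fun n => ?_
    push_cast; ring
  have hI : Tendsto (fun n : ℕ => ∫ y in Set.Ioi (0:ℝ), (Set.Ioc (0:ℝ) n).indicator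
        (fun y => (1 - y / n) ^ (m n) * Ftl ν (y / n)) y / a n) atTop
      (𝓝 (∫ y in Set.Ioi (0:ℝ), Real.exp (-(r * y)) * (d * y ^ (2-α)))) := by
    refine tendsto_integral_filter_of_dominated_convergence
      (fun y => C * Real.exp 1 * ((1 + y ^ q) * Real.exp (-(r/2 * y)))) ?_ ?_ ?_ ?_
    · exact Eventually.of_forall fun n => ((ind_meas ν (m n) n).div_const _).aestronglyMeasurable
    · filter_upwards [hP, eventually_ge_atTop 1, hm1.eventually (lt_mem_nhds (by linarith : r/2 < r))] with n hn hn1 hn2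
      filter_upwards [ae_restrict_mem measurableSet_Ioi] with y hy
      have hy : 0 < y := hy
      have := ind_bound ν (m n) n hn1 C q (a n) hn y hy hC (ha n hn1)
      rw [norm_div, Real.norm_eq_abs (a n), abs_of_pos (ha n hn1), div_le_iff₀ (ha n hn1)]
      refine this.trans ?_
      have h5 : Real.exp (-(((m n+1:ℕ):ℝ) / n * y)) ≤ Real.exp (-(r/2 * y)) := by
        gcongr
      have := (ha n hn1).le
      calc _ ≤ C * a n * Real.exp 1 * ((1 + y ^ q) * Real.exp (-(r/2 * y))) := by gcongr
        _ = _ := by ring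
    · exact (bnd_integrable q (r/2) hq (by linarith)).const_mul _
    · filter_upwards [ae_restrict_mem measurableSet_Ioi] with y hy
      have hy : 0 < y := hy
      refine ((pow_lim m r y hm).mul (hF y hy)).congr' ?_
      filter_upwards [eventually_ge_atTop ⌈y⌉₊] with n hn
      have hmem : y ∈ Set.Ioc (0:ℝ) n := ⟨hy, Nat.ceil_le.1 hn⟩
      rw [Set.indicator_of_mem hmem]
      ring
  have hval : ∫ y in Set.Ioi (0:ℝ), Real.exp (-(r * y)) * (d * y ^ (2-α))
      = d * ((1/r) ^ (3-α) * Real.Gamma (3-α)) := by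
    rw [← Real.integral_rpow_mul_exp_neg_mul_Ioi (by linarith) hr, ← integral_const_mul]
    congr 1; ext y
    rw [show 3 - α - 1 = 2 - α by ring]; ring
  rw [hval] at hI
  have := hm1.mul hI
  have e : r * (d * ((1/r) ^ (3-α) * Real.Gamma (3-α))) = d * Real.Gamma (3 - α) * r ^ (α - 2) := by
    rw [one_div, Real.inv_rpow hr.le, ← Real.rpow_neg hr.le,
      show α - 2 = 1 + (-(3-α)) by ring, Real.rpow_add hr, Real.rpow_one]; ring
  rw [e] at this
  refine this.congr' ?_
  filter_upwards [eventually_ge_atTop 1] with n hn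
  rw [cpos_eq' ν (m n) n hn, integral_div]; ring

lemma sum_eq_integral (f : ℕ → ℝ) (n : ℕ) (hn : 0 < n) :
    ∑ m ∈ Finset.range n, f m = n * ∫ r in Set.Ioc (0:ℝ) 1, f ⌊r * n⌋₊ := by
  have hn' : (0:ℝ) < n := by exact_mod_cast hn
  rw [← intervalIntegral.integral_of_le zero_le_one]
  have hsub := intervalIntegral.integral_comp_mul_right (a := 0) (b := 1)
    (fun t : ℝ => f ⌊t⌋₊) hn'.ne'
  simp only [zero_mul, one_mul, smul_eq_mul] at hsub
  rw [hsub, ← mul_assoc, mul_inv_cancel₀ hn'.ne', one_mul]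
  have hc : ∀ k : ℕ, Set.EqOn (fun t : ℝ => f ⌊t⌋₊) (fun _ => f k) (Set.Ico (k:ℝ) ((k+1:ℕ):ℝ)) := by
    intro k t ht
    have : ⌊t⌋₊ = k := (Nat.floor_eq_iff (le_trans (by positivity) ht.1)).2 ⟨ht.1, by simpa using ht.2⟩
    simp [this]
  have hae : ∀ k : ℕ, (fun _ => f k) =ᵐ[volume.restrict (Set.Ioc (k:ℝ) ((k+1:ℕ):ℝ))] (fun t : ℝ => f ⌊t⌋₊) := by
    intro k
    rw [← Measure.restrict_congr_set Ioo_ae_eq_Ioc]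
    filter_upwards [ae_restrict_mem measurableSet_Ioo] with t ht
    exact (hc k ⟨ht.1.le, ht.2⟩).symm
  have hle : ∀ k : ℕ, (k:ℝ) ≤ ((k+1:ℕ):ℝ) := fun k => by push_cast; linarith
  have := intervalIntegral.sum_integral_adjacent_intervals (μ := volume) (f := fun t : ℝ => f ⌊t⌋₊)
    (a := fun k : ℕ => (k:ℝ)) (n := n) (fun k _ => by
      rw [intervalIntegrable_iff_integrableOn_Ioc_of_le (hle k)]
      exact Integrable.congr (integrable_const _) (hae k))
  simp only [Nat.cast_zero] at this
  rw [← this]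
  refine Finset.sum_congr rfl fun k _ => ?_
  rw [intervalIntegral.integral_of_le (hle k), ← integral_congr_ae (hae k)]
  simp

lemma cpos_nonneg (ν : Measure ℝ) (m : ℕ) : 0 ≤ cpos ν m :=
  setIntegral_nonneg measurableSet_Ioc fun _ hx => pow_nonneg hx.1.le _

lemma abel_core (ν : Measure ℝ) [IsFiniteMeasure ν] (a : ℕ → ℝ) (α d : ℝ) (hα1 : 1 < α) (hα : α < 2)
    (hF : ∀ y > 0, Tendsto (fun n : ℕ => Ftl ν (y / n) / a n) atTop (𝓝 (d * y ^ (2 - α))))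
    (C q : ℝ) (hq : 0 < q) (hq1 : q < 1) (hC : 0 ≤ C) (ha : ∀ n ≥ 1, 0 < a n)
    (hP : ∀ᶠ n : ℕ in atTop, ∀ y : ℝ, 0 < y → y ≤ n → Ftl ν (y / n) ≤ C * (1 + y ^ q) * a n) :
    Tendsto (fun n : ℕ => (∑ m ∈ Finset.range n, ((n:ℝ) - ((m+1:ℕ):ℝ)) * cpos ν (m+1))
      / ((n:ℝ)^2 * a n)) atTop (𝓝 (d * Real.Gamma (3 - α) * (1 / (α * (α - 1))))) := by
  set A := d * Real.Gamma (3 - α) with hA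
  let g : ℕ → ℝ → ℝ := fun n r =>
    (1 - ((⌊r * n⌋₊ + 1 : ℕ):ℝ) / n) * (cpos ν (⌊r * n⌋₊ + 1) / a n)
  set K := C * Real.exp 1 * (1 + Real.Gamma (q+1)) with hK
  have hG : 0 < Real.Gamma (q+1) := Real.Gamma_pos_of_pos (by linarith)
  have hne1 : ∀ᵐ r : ℝ ∂(volume.restrict (Set.Ioc (0:ℝ) 1)), r ∈ Set.Ioo (0:ℝ) 1 := by
    rw [← Measure.restrict_congr_set Ioo_ae_eq_Ioc]
    exact ae_restrict_mem measurableSet_Ioo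
  have hI : Tendsto (fun n : ℕ => ∫ r in Set.Ioc (0:ℝ) 1, g n r) atTop
      (𝓝 (∫ r in Set.Ioc (0:ℝ) 1, (1 - r) * (A * r ^ (α - 2)))) := by
    refine tendsto_integral_filter_of_dominated_convergence (fun r => K * r ^ (-q)) ?_ ?_ ?_ ?_
    · refine Eventually.of_forall fun n => Measurable.aestronglyMeasurable ?_
      have : Measurable (fun k : ℕ => (1 - ((k + 1 : ℕ):ℝ) / n) * (cpos ν (k + 1) / a n)) :=
        measurable_from_nat
      exact this.comp (Nat.measurable_floor.comp (measurable_id.mul_const _))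
    · filter_upwards [hP, eventually_ge_atTop 1] with n hn hn1
      filter_upwards [hne1] with r hr
      have hn' : (0:ℝ) < n := by exact_mod_cast hn1
      have hlt : ⌊r * n⌋₊ < n := by
        rw [Nat.floor_lt (by have := hr.1; positivity)]
        nlinarith [hr.2]
      have h1 := cpos_dom ν ⌊r * n⌋₊ n hn1 hlt C q (a n) hq hC (ha n hn1) hn
      have h2 : 0 ≤ cpos ν (⌊r * n⌋₊ + 1) / a n := div_nonneg (cpos_nonneg _ _) (ha n hn1).le
      have h3 : r ≤ ((⌊r * n⌋₊ + 1 : ℕ):ℝ) / n := by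
        rw [le_div_iff₀ hn']; push_cast; exact (Nat.lt_floor_add_one _).le
      have h4 : ((⌊r * n⌋₊ + 1 : ℕ):ℝ) / n ≤ 1 := by
        rw [div_le_one hn']; exact_mod_cast hlt
      have h5 : (((⌊r * n⌋₊ + 1 : ℕ):ℝ) / n) ^ (-q) ≤ r ^ (-q) :=
        Real.rpow_le_rpow_of_nonpos hr.1 h3 (by linarith)
      have hr0 := hr.1
      rw [Real.norm_eq_abs, abs_of_nonneg (mul_nonneg (by linarith) h2)]
      calc _ ≤ 1 * (cpos ν (⌊r * n⌋₊ + 1) / a n) := by gcongr; linarith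
        _ ≤ K * (((⌊r * n⌋₊ + 1 : ℕ):ℝ) / n) ^ (-q) := by rw [one_mul]; exact h1
        _ ≤ _ := by gcongr
    · refine Integrable.const_mul ?_ _
      have := intervalIntegral.intervalIntegrable_rpow' (a := 0) (b := 1) (by linarith : -1 < -q)
      exact (intervalIntegrable_iff_integrableOn_Ioc_of_le zero_le_one).1 this
    · filter_upwards [hne1] with r hr
      have h1 : Tendsto (fun n : ℕ => (⌊r * n⌋₊ : ℝ) / n) atTop (𝓝 r) :=
        (tendsto_nat_floor_mul_div_atTop hr.1.le).comp tendsto_natCast_atTop_atTop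
      have h2 : Tendsto (fun n : ℕ => ((⌊r * n⌋₊ + 1 : ℕ) : ℝ) / n) atTop (𝓝 r) := by
        have := h1.add (tendsto_const_div_atTop_nhds_zero_nat 1)
        rw [add_zero] at this
        refine this.congr fun n => ?_
        push_cast; ring
      have h3 := cpos_lim ν a α d hα hF C q hq hC ha hP (fun n => ⌊r * n⌋₊) r hr.1 h1
      exact (h2.const_sub 1).mul h3
  have hval : ∫ r in Set.Ioc (0:ℝ) 1, (1 - r) * (A * r ^ (α - 2)) = A * (1 / (α * (α - 1))) := by
    have h1 := intervalIntegral.intervalIntegrable_rpow' (a := 0) (b := 1) (by linarith : -1 < α - 2)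
    have h2 := intervalIntegral.intervalIntegrable_rpow' (a := 0) (b := 1) (by linarith : -1 < α - 1)
    have e : ∫ r in Set.Ioc (0:ℝ) 1, (1 - r) * (A * r ^ (α - 2))
        = ∫ r in Set.Ioc (0:ℝ) 1, A * (r ^ (α-2) - r ^ (α-1)) := by
      refine setIntegral_congr_fun measurableSet_Ioc fun r hr => ?_
      have : r ^ (α - 1) = r ^ (α - 2) * r := by
        rw [show α - 1 = α - 2 + 1 by ring, Real.rpow_add hr.1, Real.rpow_one]
      simp only [this]; ring
    rw [e, integral_const_mul, ← intervalIntegral.integral_of_le zero_le_one,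
      intervalIntegral.integral_sub h1 h2, integral_rpow (Or.inl (by linarith)),
      integral_rpow (Or.inl (by linarith))]
    simp only [Real.one_rpow, sub_add_cancel]
    rw [show α - 2 + 1 = α - 1 by ring, Real.zero_rpow (by linarith), Real.zero_rpow (by linarith)]
    have : α - 1 ≠ 0 := by linarith
    have : α ≠ 0 := by linarith
    field_simp; ring
  rw [hval] at hI
  refine hI.congr' ?_
  filter_upwards [eventually_ge_atTop 1] with n hn
  have hn' : (0:ℝ) < n := by exact_mod_cast hn
  have han := ha n hn
  have := sum_eq_integral (fun m => (1 - ((m + 1 : ℕ):ℝ) / n) * (cpos ν (m + 1) / a n)) n hn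
  have h3 : ∫ r in Set.Ioc (0:ℝ) 1, g n r = (1/n:ℝ) * ∑ m ∈ Finset.range n,
      (1 - ((m + 1 : ℕ):ℝ) / n) * (cpos ν (m + 1) / a n) := by
    rw [this, ← mul_assoc, one_div, inv_mul_cancel₀ hn'.ne', one_mul]
  rw [h3, Finset.mul_sum, Finset.sum_div]
  refine Finset.sum_congr rfl fun m _ => ?_
  field_simp

lemma Var_approx (ν : Measure ℝ) [IsFiniteMeasure ν]
    (hsupp : ν (Set.Icc (-1 : ℝ) 1)ᶜ = 0) (n : ℕ) :
    |VarSeqR ν n - 2 * ∑ m ∈ Finset.range n, ((n:ℝ) - ((m+1:ℕ):ℝ)) * cpos ν (m+1)|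
      ≤ (5 * ν.real (Set.Icc (-1:ℝ) 0) + ν.real (Set.Ioc (0:ℝ) 1)) * n := by
  rw [VarSeqR_eq, integral_split ν hsupp (Gker_cont n)]
  have h1 := setIntegral_neg_bound ν (f := Gker n) (5 * n) (Gker_neg_bound n)
  have h2 : ∫ l in Set.Ioc (0:ℝ) 1, Gker n l ∂ν = n * ν.real (Set.Ioc (0:ℝ) 1)
      + 2 * ∑ m ∈ Finset.range n, ((n:ℝ) - ((m+1:ℕ):ℝ)) * cpos ν (m+1) := by
    have hIntg : ∀ f : ℝ → ℝ, Continuous f → IntegrableOn f (Set.Ioc (0:ℝ) 1) ν :=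
      fun f hf => (integrable_of_supp ν hsupp hf).integrableOn
    unfold Gker
    rw [integral_add (hIntg _ (by fun_prop)) (hIntg _ (by fun_prop)), integral_const_mul,
      integral_finsetSum _ (fun k _ => hIntg _ (by fun_prop))]
    simp only [integral_const_mul]
    rw [setIntegral_const, smul_eq_mul, mul_comm (n:ℝ)]
    congr 2
    rcases Nat.eq_zero_or_pos n with rfl | hn
    · simp
    obtain ⟨k, rfl⟩ := Nat.exists_eq_succ_of_ne_zero hn.ne'
    rw [Finset.sum_range_succ, Finset.sum_Ico_eq_sum_range]
    simp only [Nat.succ_eq_add_one, sub_self, zero_mul, add_zero, Nat.add_sub_cancel]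
    refine Finset.sum_congr rfl fun i _ => ?_
    rw [add_comm 1 i]; rfl
  rw [h2]
  rw [abs_le] at h1 ⊢
  have : 0 ≤ ν.real (Set.Ioc (0:ℝ) 1) := measureReal_nonneg
  have : 0 ≤ ν.real (Set.Icc (-1:ℝ) 0) := measureReal_nonneg
  have : (0:ℝ) ≤ n * ν.real (Set.Ioc (0:ℝ) 1) := by positivity
  constructor <;> nlinarith [h1.1, h1.2]

lemma B_seq (ν : Measure ℝ) (α : ℝ) (h : ℝ → ℝ) (hh : SlowlyVaryingAtTop h)
    (d : ℝ) (hd : 0 < d)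
    (hB : Tendsto (fun x : ℝ => Ftl ν x / (d * x ^ (2 - α) * h (1/x))) (𝓝[>] (0:ℝ)) (𝓝 1))
    (y : ℝ) (hy : 0 < y) :
    Tendsto (fun x : ℝ => Ftl ν (y * x) / (x ^ (2 - α) * h (1/x))) (𝓝[>] (0:ℝ)) (𝓝 (d * y ^ (2 - α))) := by
  have h1 : Tendsto (fun x : ℝ => y * x) (𝓝[>] 0) (𝓝[>] 0) := by
    refine tendsto_nhdsWithin_iff.2 ⟨?_, ?_⟩
    · have : Tendsto (fun x : ℝ => y * x) (𝓝 0) (𝓝 (y * 0)) := (continuous_const_mul y).tendsto 0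
      rw [mul_zero] at this
      exact this.mono_left nhdsWithin_le_nhds
    · filter_upwards [self_mem_nhdsWithin] with x hx using mul_pos hy hx
  have h2 := hB.comp h1
  have h3 : Tendsto (fun x : ℝ => h (y⁻¹ * (x⁻¹)) / h (x⁻¹)) (𝓝[>] 0) (𝓝 1) :=
    (hh.2.2 y⁻¹ (by positivity)).comp tendsto_inv_nhdsGT_zero
  have h4 := (h2.mul h3).mul_const (d * y ^ (2-α))
  rw [one_mul, one_mul] at h4
  refine h4.congr' ?_
  filter_upwards [self_mem_nhdsWithin] with x hx
  have hx : 0 < x := hx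
  simp only [Function.comp]
  have hp1 := hh.1 (y⁻¹ * x⁻¹) (by positivity)
  have hp2 := hh.1 (x⁻¹) (by positivity)
  rw [Real.mul_rpow hy.le hx.le, one_div, one_div, mul_inv]
  have : 0 < x ^ (2-α) := by positivity
  have : 0 < y ^ (2-α) := by positivity
  generalize h (y⁻¹ * x⁻¹) = A at *
  generalize h (x⁻¹) = B at *
  field_simp

lemma abelian (ν : Measure ℝ) [IsFiniteMeasure ν]
    (hsupp : ν (Set.Icc (-1 : ℝ) 1)ᶜ = 0)
    (α : ℝ) (hα : α ∈ Set.Ioo (1:ℝ) 2)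
    (h : ℝ → ℝ) (hh : SlowlyVaryingAtTop h)
    (d : ℝ) (hd : d = α * (α - 1) / (2 * Real.Gamma (3 - α)))
    (hB : Tendsto (fun x : ℝ => Ftl ν x / (d * x ^ (2 - α) * h (1/x))) (𝓝[>] (0:ℝ)) (𝓝 1)) :
    Tendsto (fun n : ℕ => VarSeqR ν n / ((n : ℝ) ^ α * h n)) atTop (𝓝 1) := by
  obtain ⟨hα1, hα2⟩ := hα
  have hGam : 0 < Real.Gamma (3 - α) := Real.Gamma_pos_of_pos (by linarith)
  have hd0 : 0 < d := by
    rw [hd]; have : 0 < α - 1 := by linarith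
    positivity
  set a : ℕ → ℝ := fun n => (n:ℝ) ^ (α - 2) * h n with ha_def
  have ha : ∀ n ≥ 1, 0 < a n := by
    intro n hn
    have hn' : (0:ℝ) < n := by exact_mod_cast hn
    have := hh.1 n hn'
    positivity
  have hs := B_seq ν α h hh d hd0 hB
  have hinvn : Tendsto (fun n : ℕ => ((n:ℝ))⁻¹) atTop (𝓝[>] 0) :=
    tendsto_inv_atTop_nhdsGT_zero.comp tendsto_natCast_atTop_atTop
  have hF : ∀ y > 0, Tendsto (fun n : ℕ => Ftl ν (y / n) / a n) atTop (𝓝 (d * y ^ (2 - α))) := by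
    intro y hy
    refine ((hs y hy).comp hinvn).congr' ?_
    filter_upwards [eventually_ge_atTop 1] with n hn
    have hn' : (0:ℝ) < n := by exact_mod_cast hn
    simp only [Function.comp, ha_def]
    rw [Real.inv_rpow hn'.le, ← Real.rpow_neg hn'.le, one_div, inv_inv, neg_sub, div_eq_mul_inv y]
  have hposF : ∀ᶠ x in 𝓝[>] (0:ℝ), 0 < Ftl ν x := by
    filter_upwards [hB.eventually (lt_mem_nhds zero_lt_one), self_mem_nhdsWithin] with x hx hx0
    rcases (Ftl_nonneg ν x).eq_or_lt with h0 | h0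
    · rw [← h0] at hx; simp at hx
    · exact h0
  have hratio : Tendsto (fun x => Ftl ν (2 * x) / Ftl ν x) (𝓝[>] 0) (𝓝 ((2:ℝ) ^ (2-α))) := by
    have h1 := (hs 2 two_pos).div (hs 1 one_pos) (by simp [hd0.ne'])
    have e : d * 2 ^ (2 - α) / (d * 1 ^ (2-α)) = (2:ℝ) ^ (2-α) := by
      rw [Real.one_rpow]; field_simp
    rw [e] at h1
    refine h1.congr' ?_
    filter_upwards [self_mem_nhdsWithin] with x hx
    have hx : 0 < x := hx
    have := hh.1 (1/x) (by positivity)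
    have : 0 < x ^ (2-α) * h (1/x) := by positivity
    simp only [Pi.div_apply, one_mul]
    exact div_div_div_cancel_right₀ this.ne' _ _
  set q : ℝ := (3 - α)/2 with hq_def
  have hq0 : 0 < q := by rw [hq_def]; linarith
  have hq1 : q < 1 := by rw [hq_def]; linarith
  obtain ⟨C, hC, δ, hδ, hδ1, hpot⟩ := potter_aux (Ftl ν) (Ftl_mono ν) (Ftl_nonneg ν) (2-α) q hq0
    (by rw [hq_def]; linarith) hratio hposF
  have hF1 := hF 1 one_pos
  rw [Real.one_rpow, mul_one] at hF1
  set C' := (C + 1) * (2 * d) with hC'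
  have hP : ∀ᶠ n : ℕ in atTop, ∀ y : ℝ, 0 < y → y ≤ n → Ftl ν (y / n) ≤ C' * (1 + y ^ q) * a n := by
    filter_upwards [eventually_ge_atTop 1, eventually_ge_atTop ⌈1/δ⌉₊,
      hF1.eventually (gt_mem_nhds (by linarith : d < 2 * d))] with n hn hnδ hn2 y hy hyn
    have hn' : (0:ℝ) < n := by exact_mod_cast hn
    have han := ha n hn
    rw [div_lt_iff₀ han] at hn2
    have hyq : 0 ≤ y ^ q := by positivity
    have hF0 := Ftl_nonneg ν (1/n)
    rcases le_total y 1 with hy1 | hy1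
    · calc Ftl ν (y/n) ≤ Ftl ν (1/n) := Ftl_mono ν (by gcongr)
        _ ≤ 1 * (2 * d) * 1 * a n := by linarith
        _ ≤ _ := by rw [hC']; gcongr <;> linarith
    · have h1n : 1 / (n:ℝ) ≤ δ := by
        rw [div_le_iff₀ hn', ← div_le_iff₀' hδ]; exact Nat.ceil_le.1 hnδ
      have := hpot (1/n) (y/n) (by positivity) h1n (by gcongr) ((div_le_one hn').2 hyn)
      rw [show y / n / (1 / (n:ℝ)) = y by field_simp] at this
      calc _ ≤ _ := this
        _ ≤ C * y ^ q * (2 * d * a n) := by gcongr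
        _ = (C * (2 * d)) * y ^ q * a n := by ring
        _ ≤ _ := by rw [hC']; gcongr <;> linarith
  have hC'0 : 0 ≤ C' := by rw [hC']; positivity
  have hcore := abel_core ν a α d hα1 hα2 hF C' q hq0 hq1 hC'0 ha hP
  have hcst : d * Real.Gamma (3 - α) * (1 / (α * (α - 1))) = 1/2 := by
    rw [hd]
    have : α - 1 ≠ 0 := by linarith
    have : α ≠ 0 := by linarith
    field_simp
  rw [hcst] at hcore
  have hF1pos : 0 < Ftl ν 1 := by
    obtain ⟨x, hx, hx1⟩ := (hposF.and (Ioo_mem_nhdsGT (zero_lt_one (α := ℝ)))).exists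
    exact hx.trans_le (Ftl_mono ν hx1.2.le)
  have hsmall : Tendsto (fun n : ℕ => (n:ℝ) / ((n:ℝ)^2 * a n)) atTop (𝓝 0) := by
    have hb : Tendsto (fun n : ℕ => C' / Ftl ν 1 * (1 / (n:ℝ) + (n:ℝ) ^ (q - 1))) atTop (𝓝 0) := by
      have h1 := (tendsto_rpow_neg_atTop (by linarith : 0 < 1 - q)).comp (tendsto_natCast_atTop_atTop (R := ℝ))
      have h2 := ((tendsto_const_div_atTop_nhds_zero_nat (1:ℝ)).add h1).const_mul (C' / Ftl ν 1)
      simpa [Function.comp_def] using h2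
    refine squeeze_zero' ?_ ?_ hb
    · filter_upwards [eventually_ge_atTop 1] with n hn
      have := ha n hn
      positivity
    · filter_upwards [eventually_ge_atTop 1, hP] with n hn hn2
      have han := ha n hn
      have hn' : (0:ℝ) < n := by exact_mod_cast hn
      have h3 := hn2 n hn' le_rfl
      rw [div_self hn'.ne'] at h3
      rw [div_le_iff₀ (by positivity)]
      have e : C' / Ftl ν 1 * (1 / (n:ℝ) + (n:ℝ) ^ (q - 1)) * ((n:ℝ)^2 * a n)
        = n * (C' * (1 + (n:ℝ) ^ q) * a n / Ftl ν 1) := by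
        rw [Real.rpow_sub hn', Real.rpow_one]; field_simp
      rw [e]
      have : 1 ≤ C' * (1 + (n:ℝ) ^ q) * a n / Ftl ν 1 := (one_le_div hF1pos).2 h3
      nlinarith
  have hlim2 := hcore.const_mul 2
  rw [show (2:ℝ) * (1/2) = 1 by norm_num] at hlim2
  have hdiff : Tendsto (fun n : ℕ => (VarSeqR ν n -
      2 * ∑ m ∈ Finset.range n, ((n:ℝ) - ((m+1:ℕ):ℝ)) * cpos ν (m+1)) / ((n:ℝ)^2 * a n)) atTop (𝓝 0) := by
    set M := (5 * ν.real (Set.Icc (-1:ℝ) 0) + ν.real (Set.Ioc (0:ℝ) 1))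
    have := hsmall.const_mul M
    rw [mul_zero] at this
    refine squeeze_zero_norm' ?_ this
    filter_upwards [eventually_ge_atTop 1] with n hn
    have han := ha n hn
    have hn' : (0:ℝ) < n := by exact_mod_cast hn
    rw [norm_div, Real.norm_eq_abs, Real.norm_eq_abs ((n:ℝ)^2 * a n), abs_of_pos (by positivity : 0 < (n:ℝ)^2 * a n), ← mul_div_assoc]
    gcongr
    exact Var_approx ν hsupp n
  have := hdiff.add hlim2
  rw [zero_add] at this
  refine this.congr' ?_
  filter_upwards [eventually_ge_atTop 1] with n hn
  have hn' : (0:ℝ) < n := by exact_mod_cast hn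
  have e : (n:ℝ) ^ α * h n = (n:ℝ)^2 * a n := by
    simp only [ha_def]
    rw [← mul_assoc, ← Real.rpow_natCast, ← Real.rpow_add hn']; norm_num
  rw [e]; ring

/-! ### Tauberian direction -/

noncomputable def Lam (ν : Measure ℝ) (n : ℕ) (f : ℝ → ℝ) : ℝ :=
  ∫ l in Set.Ioc (0:ℝ) 1, f (l ^ n) * (2 * l * (Sgeo n l)^2) ∂ν

lemma Lam_int (ν : Measure ℝ) [IsFiniteMeasure ν] (hsupp : ν (Set.Icc (-1 : ℝ) 1)ᶜ = 0)
    (n : ℕ) {f : ℝ → ℝ} (hf : Continuous f) :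
    IntegrableOn (fun l => f (l ^ n) * (2 * l * (Sgeo n l)^2)) (Set.Ioc (0:ℝ) 1) ν := by
  have := Sgeo_cont n
  exact (integrable_of_supp ν hsupp (by fun_prop)).integrableOn

lemma Lam_moment (ν : Measure ℝ) [IsFiniteMeasure ν] (hsupp : ν (Set.Icc (-1 : ℝ) 1)ᶜ = 0)
    (α : ℝ) (hα : 0 < α) (h : ℝ → ℝ) (hh : SlowlyVaryingAtTop h)
    (hA : Tendsto (fun n : ℕ => VarSeqR ν n / ((n : ℝ) ^ α * h n)) atTop (𝓝 1))
    (hbig : Tendsto (fun n : ℕ => (n : ℝ) ^ α * h n) atTop atTop) (k : ℕ) :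
    Tendsto (fun n : ℕ => Lam ν n (fun w => w ^ k) / ((n : ℝ) ^ α * h n)) atTop
      (𝓝 (((k+2:ℕ):ℝ) ^ α - 2 * ((k+1:ℕ):ℝ) ^ α + (k:ℝ) ^ α)) := by
  have hV : ∀ j : ℕ, Tendsto (fun n : ℕ => VarSeqR ν (j * n) / ((n : ℝ) ^ α * h n)) atTop
      (𝓝 ((j:ℝ) ^ α)) := by
    intro j
    rcases Nat.eq_zero_or_pos j with rfl | hj
    · simp [VarSeqR, Real.zero_rpow hα.ne']
    have hj' : (0:ℝ) < j := by exact_mod_cast hj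
    have h1 : Tendsto (fun n : ℕ => j * n) atTop atTop := tendsto_id.const_mul_atTop' hj
    have h2 := hA.comp h1
    have h3 := (hh.2.2 j hj').comp (tendsto_natCast_atTop_atTop (R := ℝ))
    have h4 := (h2.mul h3).mul_const ((j:ℝ) ^ α)
    rw [one_mul, one_mul] at h4
    refine h4.congr' ?_
    filter_upwards [eventually_ge_atTop 1] with n hn
    have hn' : (0:ℝ) < n := by exact_mod_cast hn
    have p1 := hh.1 n hn'
    have p2 := hh.1 (j * n) (by positivity)
    simp only [Function.comp]
    push_cast
    rw [Real.mul_rpow hj'.le hn'.le]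
    have : 0 < (n:ℝ) ^ α := by positivity
    have : 0 < (j:ℝ) ^ α := by positivity
    field_simp
  have hS : ∀ n l, -1 ≤ l → l ≤ 0 → |2 * l ^ (k*n+1) * (Sgeo n l)^2| ≤ 8 := by
    intro n l h1 h0
    have hl : |l| ≤ 1 := abs_le.2 ⟨h1, by linarith⟩
    have hp : ∀ j : ℕ, |l ^ j| ≤ 1 := fun j => by rw [abs_pow]; exact pow_le_one₀ (abs_nonneg _) hl
    have hs : |Sgeo n l| ≤ 2 := by
      have e := congrArg abs (Sgeo_mul n l)
      rw [abs_mul] at e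
      have h3 : |l ^ n - 1| ≤ 2 := by
        have := abs_le.1 (hp n); rw [abs_le]; constructor <;> linarith
      have h4 : 1 ≤ |l - 1| := by rw [abs_of_nonpos (by linarith)]; linarith
      nlinarith [abs_nonneg (Sgeo n l)]
    rw [abs_mul, abs_mul, abs_pow (Sgeo n l), abs_two]
    have h5 : |Sgeo n l|^2 ≤ 2^2 := by gcongr
    calc 2 * |l ^ (k*n+1)| * |Sgeo n l|^2 ≤ 2 * 1 * 2^2 := by gcongr; exact hp _
      _ = 8 := by norm_num
  have hdec : ∀ n, Lam ν n (fun w => w ^ k) = VarSeqR ν ((k+2)*n) - 2 * VarSeqR ν ((k+1)*n) + VarSeqR ν (k*n)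
      - ∫ l in Set.Icc (-1:ℝ) 0, 2 * l ^ (k*n+1) * (Sgeo n l)^2 ∂ν := by
    intro n
    have hc := Sgeo_cont n
    have hi := fun m => integrable_of_supp ν hsupp (Gker_cont m)
    have h1 := integral_split ν hsupp (f := fun l => 2 * l ^ (k*n+1) * (Sgeo n l)^2) (by fun_prop)
    have h2 : ∫ l, 2 * l ^ (k*n+1) * (Sgeo n l)^2 ∂ν
        = VarSeqR ν ((k+2)*n) - 2 * VarSeqR ν ((k+1)*n) + VarSeqR ν (k*n) := by
      simp only [← Gker_second_diff, VarSeqR_eq]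
      have hsub : Integrable (fun l => Gker ((k+2)*n) l - 2 * Gker ((k+1)*n) l) ν :=
        (hi _).sub ((hi _).const_mul 2)
      rw [integral_add hsub (hi _),
        integral_sub (hi _) ((hi _).const_mul 2), integral_const_mul]
    have h3 : Lam ν n (fun w => w ^ k) = ∫ l in Set.Ioc (0:ℝ) 1, 2 * l ^ (k*n+1) * (Sgeo n l)^2 ∂ν := by
      unfold Lam
      congr 1; ext l
      rw [pow_succ l, mul_comm k n, pow_mul]; ring
    rw [h3, ← h2, h1]; ring
  have herr : Tendsto (fun n : ℕ => (∫ l in Set.Icc (-1:ℝ) 0, 2 * l ^ (k*n+1) * (Sgeo n l)^2 ∂ν)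
      / ((n : ℝ) ^ α * h n)) atTop (𝓝 0) := by
    refine squeeze_zero_norm' ?_ (Tendsto.const_div_atTop hbig (8 * ν.real (Set.Icc (-1:ℝ) 0)))
    filter_upwards [hbig.eventually_gt_atTop 0] with n hn
    rw [norm_div, Real.norm_eq_abs, Real.norm_eq_abs (_ * _), abs_of_pos hn]
    gcongr
    exact setIntegral_neg_bound ν 8 (hS n)
  have := (((hV (k+2)).sub ((hV (k+1)).const_mul 2)).add (hV k)).sub herr
  rw [sub_zero] at this
  refine this.congr fun n => ?_
  rw [hdec]; ring

lemma Lam_poly (ν : Measure ℝ) [IsFiniteMeasure ν] (hsupp : ν (Set.Icc (-1 : ℝ) 1)ᶜ = 0)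
    (b : ℕ → ℝ) (m : ℕ → ℝ)
    (hmom : ∀ k, Tendsto (fun n : ℕ => Lam ν n (fun w => w ^ k) / b n) atTop (𝓝 (m k)))
    (p : Polynomial ℝ) :
    Tendsto (fun n : ℕ => Lam ν n (fun w => p.eval w) / b n) atTop
      (𝓝 (p.sum fun k c => c * m k)) := by
  induction p using Polynomial.induction_on' with
  | add p q hp hq =>
    rw [Polynomial.sum_add_index _ _ _ (by simp) (by intros; ring)]
    refine (hp.add hq).congr fun n => ?_
    have : Lam ν n (fun w => (p+q).eval w) = Lam ν n (fun w => p.eval w) + Lam ν n (fun w => q.eval w) := by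
      unfold Lam
      rw [← integral_add (Lam_int ν hsupp n p.continuous) (Lam_int ν hsupp n q.continuous)]
      congr 1; ext l; simp; ring
    rw [this]; ring
  | monomial k c =>
    rw [Polynomial.sum_monomial_index _ _ (by simp)]
    refine ((hmom k).const_mul c).congr fun n => ?_
    have : Lam ν n (fun w => (Polynomial.monomial k c).eval w) = c * Lam ν n (fun w => w ^ k) := by
      unfold Lam
      rw [← integral_const_mul]
      congr 1; ext l; simp; ring
    rw [this]; ring

lemma Lam_close (ν : Measure ℝ) [IsFiniteMeasure ν] (hsupp : ν (Set.Icc (-1 : ℝ) 1)ᶜ = 0)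
    (f p : ℝ → ℝ) (hf : Continuous f) (hp : Continuous p) (ε : ℝ)
    (hfp : ∀ w ∈ Set.Icc (0:ℝ) 1, |p w - f w| ≤ ε) (n : ℕ) :
    |Lam ν n f - Lam ν n p| ≤ ε * Lam ν n (fun w => w ^ 0) := by
  unfold Lam
  rw [← integral_sub (Lam_int ν hsupp n hf) (Lam_int ν hsupp n hp), ← integral_const_mul,
    ← Real.norm_eq_abs]
  refine norm_integral_le_of_norm_le ((Lam_int ν hsupp n (f := fun w => w ^ 0) (by fun_prop)).const_mul _) ?_
  filter_upwards [ae_restrict_mem measurableSet_Ioc] with l hl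
  have h0 := hl.1
  rw [← sub_mul, Real.norm_eq_abs, abs_mul, pow_zero, one_mul,
    abs_of_nonneg (by positivity : 0 ≤ 2 * l * (Sgeo n l)^2), abs_sub_comm]
  gcongr
  exact hfp _ ⟨by positivity, pow_le_one₀ h0.le hl.2⟩

lemma Lam_cont (ν ν0 : Measure ℝ) [IsFiniteMeasure ν] [IsFiniteMeasure ν0]
    (hsupp : ν (Set.Icc (-1 : ℝ) 1)ᶜ = 0) (hsupp0 : ν0 (Set.Icc (-1 : ℝ) 1)ᶜ = 0)
    (b b0 : ℕ → ℝ) (hb : ∀ n ≥ 1, 0 < b n) (hb0 : ∀ n ≥ 1, 0 < b0 n) (m : ℕ → ℝ)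
    (hmom : ∀ k, Tendsto (fun n : ℕ => Lam ν n (fun w => w ^ k) / b n) atTop (𝓝 (m k)))
    (hmom0 : ∀ k, Tendsto (fun n : ℕ => Lam ν0 n (fun w => w ^ k) / b0 n) atTop (𝓝 (m k)))
    (f : ℝ → ℝ) (hf : Continuous f) :
    Tendsto (fun n : ℕ => Lam ν n f / b n - Lam ν0 n f / b0 n) atTop (𝓝 0) := by
  rw [Metric.tendsto_nhds]
  intro ε hε
  set M := |m 0| + 1 with hM
  have hM0 : 0 < M := by rw [hM]; positivity
  have hmM : m 0 < M := by rw [hM]; linarith [le_abs_self (m 0)]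
  set η := ε / (4 * M) with hη
  have hη0 : 0 < η := by rw [hη]; positivity
  obtain ⟨p, hp⟩ := exists_polynomial_near_of_continuousOn 0 1 f hf.continuousOn η hη0
  have hpp := (Lam_poly ν hsupp b m hmom p).sub (Lam_poly ν0 hsupp0 b0 m hmom0 p)
  rw [sub_self] at hpp
  filter_upwards [Metric.tendsto_nhds.1 hpp (ε/4) (by positivity), eventually_ge_atTop 1,
    (hmom 0).eventually (gt_mem_nhds hmM), (hmom0 0).eventually (gt_mem_nhds hmM)] with n h1 hn h2 h3
  rw [Real.dist_eq, sub_zero] at h1 ⊢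
  have hc : ∀ (μ : Measure ℝ) [IsFiniteMeasure μ] (c : ℝ), μ (Set.Icc (-1 : ℝ) 1)ᶜ = 0 → 0 < c →
      Lam μ n (fun w => w ^ 0) / c < M →
      |Lam μ n f / c - Lam μ n (fun w => p.eval w) / c| ≤ ε/4 := by
    intro μ _ c hμ hc0 hcM
    have := Lam_close μ hμ f (fun w => p.eval w) hf p.continuous η (fun w hw => (hp w hw).le) n
    rw [← sub_div, abs_div, abs_of_pos hc0]
    calc _ ≤ η * Lam μ n (fun w => w ^ 0) / c := by gcongr
      _ = η * (Lam μ n (fun w => w ^ 0) / c) := by ring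
      _ ≤ η * M := by gcongr
      _ = ε/4 := by rw [hη]; field_simp
  have h4 := hc ν (b n) hsupp (hb n hn) h2
  have h5 := hc ν0 (b0 n) hsupp0 (hb0 n hn) h3
  rw [abs_le] at h4 h5
  rw [abs_lt] at h1 ⊢
  constructor <;> linarith [h4.1, h4.2, h5.1, h5.2, h1.1, h1.2]

noncomputable def qd (l : ℝ) : ℝ := dslope Real.log 1 l

lemma qd_mul (l : ℝ) : (l - 1) * qd l = Real.log l := by
  have := sub_smul_dslope Real.log 1 l
  simpa [qd] using this

lemma qd_one : qd 1 = 1 := by simp [qd, dslope_same]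

lemma qd_contAt (l : ℝ) (hl : 0 < l) : ContinuousAt qd l := by
  unfold qd
  by_cases h : l = 1
  · subst h
    exact continuousAt_dslope_same.2 (Real.differentiableAt_log one_ne_zero)
  · exact (continuousAt_dslope_of_ne h).2 (Real.continuousAt_log hl.ne')

lemma Sgeo_qd (n : ℕ) (l : ℝ) : Sgeo n l * qd (l ^ n) = n * qd l := by
  by_cases h : l = 1
  · subst h; simp [Sgeo, qd_one]
  · have h1 : l - 1 ≠ 0 := sub_ne_zero.2 h
    apply mul_left_cancel₀ h1
    have h2 := qd_mul (l ^ n)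
    rw [← Sgeo_mul, Real.log_pow, ← qd_mul l] at h2
    linarith

noncomputable def gcut (a b w : ℝ) : ℝ :=
  max 0 (min 1 ((w - Real.exp (-b)) / (Real.exp (-a) - Real.exp (-b))))

lemma gcut_cont (a b : ℝ) : Continuous (gcut a b) := by unfold gcut; fun_prop

lemma gcut_nonneg (a b w : ℝ) : 0 ≤ gcut a b w := le_max_left _ _
lemma gcut_le_one (a b w : ℝ) : gcut a b w ≤ 1 := max_le zero_le_one (min_le_left _ _)

lemma gcut_zero (a b w : ℝ) (hab : a < b) (hw : w ≤ Real.exp (-b)) : gcut a b w = 0 := by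
  have h1 : Real.exp (-b) < Real.exp (-a) := Real.exp_lt_exp.2 (by linarith)
  unfold gcut
  apply max_eq_left
  refine (min_le_right _ _).trans (div_nonpos_of_nonpos_of_nonneg (by linarith) (by linarith))

lemma gcut_one (a b w : ℝ) (hab : a < b) (hw : Real.exp (-a) ≤ w) : gcut a b w = 1 := by
  have h1 : Real.exp (-b) < Real.exp (-a) := Real.exp_lt_exp.2 (by linarith)
  unfold gcut
  rw [min_eq_left, max_eq_right zero_le_one]
  rw [le_div_iff₀ (by linarith)]; linarith

noncomputable def fcut (a b w : ℝ) : ℝ := gcut a b w * qd (max w (Real.exp (-b))) ^ 2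

lemma fcut_cont (a b : ℝ) : Continuous (fcut a b) := by
  unfold fcut
  refine (gcut_cont a b).mul (Continuous.pow ?_ 2)
  rw [continuous_iff_continuousAt]
  intro w
  have h1 : ContinuousAt (fun w => max w (Real.exp (-b))) w := by fun_prop
  exact ContinuousAt.comp (f := fun w => max w (Real.exp (-b))) (g := qd)
    (qd_contAt _ (lt_max_of_lt_right (Real.exp_pos _))) h1

lemma fcut_eq (a b : ℝ) (hab : a < b) (n : ℕ) (l : ℝ) :
    fcut a b (l ^ n) * (2 * l * (Sgeo n l)^2) = 2 * (n:ℝ)^2 * (gcut a b (l ^ n) * (l * qd l ^ 2)) := by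
  rcases le_total (l ^ n) (Real.exp (-b)) with h | h
  · simp [fcut, gcut_zero a b _ hab h]
  · unfold fcut
    rw [max_eq_left h]
    have := Sgeo_qd n l
    calc _ = 2 * l * gcut a b (l ^ n) * (Sgeo n l * qd (l ^ n))^2 := by ring
      _ = _ := by rw [this]; ring

lemma Lam_fcut (ν : Measure ℝ) (a b : ℝ) (hab : a < b) (n : ℕ) :
    Lam ν n (fcut a b) = 2 * (n:ℝ)^2 * ∫ l in Set.Ioc (0:ℝ) 1, gcut a b (l ^ n) * (l * qd l ^ 2) ∂ν := by
  unfold Lam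
  simp only [fcut_eq a b hab]
  rw [integral_const_mul]

lemma cut_bounds (ν : Measure ℝ) [IsFiniteMeasure ν] (hsupp : ν (Set.Icc (-1 : ℝ) 1)ᶜ = 0)
    (a' a b ε : ℝ) (h0 : 0 < a') (ha : a' < a) (hab : a < b) (hε : 0 < ε) (hε1 : ε < 1) :
    ∀ᶠ n : ℕ in atTop,
      (1 - ε) * Ftl ν (a' / n) ≤ ∫ l in Set.Ioc (0:ℝ) 1, gcut a b (l ^ n) * (l * qd l ^ 2) ∂ν ∧
      ∫ l in Set.Ioc (0:ℝ) 1, gcut a b (l ^ n) * (l * qd l ^ 2) ∂ν ≤ (1 + ε) * Ftl ν (b / n) := by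
  have hc : ContinuousAt (fun l => l * qd l ^ 2) 1 :=
    continuousAt_id.mul ((qd_contAt 1 one_pos).pow 2)
  obtain ⟨δ, hδ, hδq⟩ := Metric.continuousAt_iff.1 hc ε hε
  simp only [qd_one, one_pow, mul_one, Real.dist_eq] at hδq
  have hlim : Tendsto (fun n : ℕ => (1 - a' / n) ^ n) atTop (𝓝 (Real.exp (-(1 * a')))) := by
    refine pow_lim (fun n => n) 1 a' ?_
    refine tendsto_const_nhds.congr' ?_
    filter_upwards [eventually_ge_atTop 1] with n hn
    have hn' : (n:ℝ) ≠ 0 := by positivity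
    rw [div_self hn']
  have hlt : Real.exp (-a) < Real.exp (-(1 * a')) := Real.exp_lt_exp.2 (by linarith)
  filter_upwards [eventually_ge_atTop 1, eventually_gt_atTop ⌈b / δ⌉₊, eventually_ge_atTop ⌈b⌉₊,
    hlim.eventually (lt_mem_nhds hlt)] with n hn hnδ hnb hna
  have hn' : (0:ℝ) < n := by exact_mod_cast hn
  have hb0 : 0 < b := by linarith
  have hbn : b / n < δ := by
    have := Nat.lt_of_ceil_lt hnδ
    rw [div_lt_iff₀ hδ] at this
    rw [div_lt_iff₀ hn']; linarith
  have hbn1 : b / n ≤ 1 := (div_le_one hn').2 (Nat.ceil_le.1 hnb)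
  have ha'n : a' / n < b / n := by gcongr; linarith
  have hq : ∀ l, 1 - b / n < l → l ≤ 1 → 1 - ε ≤ l * qd l ^ 2 ∧ l * qd l ^ 2 ≤ 1 + ε := by
    intro l h1 h2
    have := hδq (x := l) (by rw [abs_lt]; constructor <;> linarith)
    rw [abs_lt] at this
    constructor <;> linarith [this.1, this.2]
  have hIntg : IntegrableOn (fun l => gcut a b (l ^ n) * (l * qd l ^ 2)) (Set.Ioc (0:ℝ) 1) ν := by
    have := Lam_int ν hsupp n (fcut_cont a b)
    simp only [fcut_eq a b hab] at this
    have h3 := this.const_mul (2 * (n:ℝ)^2)⁻¹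
    refine h3.congr (Eventually.of_forall fun l => ?_)
    simp only
    rw [← mul_assoc, inv_mul_cancel₀ (by positivity), one_mul]
  have hindi : ∀ (x c : ℝ), IntegrableOn ((Set.Ioc (1 - x) 1).indicator fun _ => c) (Set.Ioc (0:ℝ) 1) ν :=
    fun x c => ((integrable_const c).indicator measurableSet_Ioc).integrableOn
  have hind : ∀ (x c : ℝ), x ≤ 1 → ∫ l in Set.Ioc (0:ℝ) 1, (Set.Ioc (1 - x) 1).indicator (fun _ => c) l ∂ν
      = c * Ftl ν x := by
    intro x c hx
    rw [setIntegral_indicator measurableSet_Ioc, Set.inter_eq_self_of_subset_right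
      (Set.Ioc_subset_Ioc_left (by linarith)), setIntegral_const, smul_eq_mul, mul_comm]
    rfl
  constructor
  · rw [← hind _ _ (by linarith)]
    refine setIntegral_mono_on (hindi _ _) hIntg measurableSet_Ioc fun l hl => ?_
    by_cases hl2 : l ∈ Set.Ioc (1 - a'/n) 1
    · rw [Set.indicator_of_mem hl2, gcut_one a b _ hab, one_mul]
      · exact (hq l (by linarith [hl2.1]) hl2.2).1
      · refine hna.le.trans ?_
        have : 0 ≤ 1 - a' / n := by linarith
        have := hl2.1.le
        gcongr
    · rw [Set.indicator_of_notMem hl2]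
      have := gcut_nonneg a b (l ^ n)
      have := hl.1
      positivity
  · rw [← hind _ _ hbn1]
    refine setIntegral_mono_on hIntg (hindi _ _) measurableSet_Ioc fun l hl => ?_
    have hl0 := hl.1
    by_cases hl2 : l ∈ Set.Ioc (1 - b/n) 1
    · rw [Set.indicator_of_mem hl2]
      have h5 := gcut_le_one a b (l ^ n)
      have h6 := (hq l hl2.1 hl2.2).2
      have h7 : 0 ≤ l * qd l ^ 2 := by positivity
      nlinarith
    · rw [Set.indicator_of_notMem hl2, gcut_zero a b _ hab, zero_mul]
      have h8 : l ≤ 1 - b/n := by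
        by_contra hcon
        exact hl2 ⟨not_le.1 hcon, hl.2⟩
      calc l ^ n ≤ (Real.exp (-(b/n))) ^ n := by
            gcongr; linarith [Real.add_one_le_exp (-(b/n))]
        _ = Real.exp (-b) := by
            rw [← Real.exp_nat_mul]; congr 1; field_simp

/-! ### A reference measure -/

noncomputable def nuRef (β d : ℝ) : Measure ℝ :=
  ENNReal.ofReal d • ((volume.restrict (Set.Icc (0:ℝ) 1)).map (fun u => 1 - u ^ (1/β)))

lemma nuRef_meas (β : ℝ) : Measurable (fun u : ℝ => 1 - u ^ (1/β)) := by fun_prop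

instance nuRef_fin (β d : ℝ) : IsFiniteMeasure (nuRef β d) := by
  unfold nuRef
  exact Measure.smul_finite _ ENNReal.ofReal_ne_top

lemma nuRef_supp (β d : ℝ) (hβ : 0 < β) : nuRef β d (Set.Icc (-1 : ℝ) 1)ᶜ = 0 := by
  unfold nuRef
  rw [Measure.smul_apply, Measure.map_apply (nuRef_meas β) measurableSet_Icc.compl]
  have : (volume.restrict (Set.Icc (0:ℝ) 1)) ((fun u : ℝ => 1 - u ^ (1/β)) ⁻¹' (Set.Icc (-1 : ℝ) 1)ᶜ) = 0 := by
    rw [Measure.restrict_apply (nuRef_meas β measurableSet_Icc.compl)]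
    convert measure_empty (μ := (volume : Measure ℝ))
    rw [Set.eq_empty_iff_forall_notMem]
    rintro u ⟨h1, h2⟩
    apply h1
    have h3 : 0 ≤ u ^ (1/β) := Real.rpow_nonneg h2.1 _
    have h4 : u ^ (1/β) ≤ 1 := Real.rpow_le_one h2.1 h2.2 (by positivity)
    constructor <;> simp only <;> linarith
  rw [this]; simp

lemma nuRef_Ftl (β d : ℝ) (hβ : 0 < β) (hd : 0 < d) (x : ℝ) (hx : 0 < x) (hx1 : x ≤ 1) :
    Ftl (nuRef β d) x = d * x ^ β := by
  unfold Ftl nuRef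
  rw [Measure.smul_apply, Measure.map_apply (nuRef_meas β) measurableSet_Ioc,
    Measure.restrict_apply (nuRef_meas β measurableSet_Ioc)]
  have hxb : x ^ β ≤ 1 := Real.rpow_le_one hx.le hx1 hβ.le
  have : (fun u : ℝ => 1 - u ^ (1/β)) ⁻¹' Set.Ioc (1 - x) 1 ∩ Set.Icc 0 1 = Set.Ico 0 (x ^ β) := by
    ext u
    simp only [Set.mem_inter_iff, Set.mem_preimage, Set.mem_Ioc, Set.mem_Icc, Set.mem_Ico]
    constructor
    · rintro ⟨⟨h1, h2⟩, h3, h4⟩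
      refine ⟨h3, ?_⟩
      have h5 : u ^ (1/β) < x := by linarith
      have := Real.rpow_lt_rpow (Real.rpow_nonneg h3 _) h5 hβ
      rwa [← Real.rpow_mul h3, one_div_mul_cancel hβ.ne', Real.rpow_one] at this
    · rintro ⟨h3, h4⟩
      have := Real.rpow_lt_rpow h3 h4 (by positivity : 0 < 1/β)
      rw [← Real.rpow_mul hx.le, mul_one_div_cancel hβ.ne', Real.rpow_one] at this
      have h6 := Real.rpow_nonneg h3 (1/β)
      exact ⟨⟨by linarith, by linarith⟩, h3, by linarith⟩
  rw [this, Real.volume_Ico, sub_zero, smul_eq_mul, ENNReal.toReal_mul, ENNReal.toReal_ofReal hd.le,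
    ENNReal.toReal_ofReal (by positivity)]

lemma tauber_sandwich (ν : Measure ℝ) [IsFiniteMeasure ν]
    (hsupp : ν (Set.Icc (-1 : ℝ) 1)ᶜ = 0)
    (α : ℝ) (hα : α ∈ Set.Ioo (1:ℝ) 2)
    (h : ℝ → ℝ) (hh : SlowlyVaryingAtTop h)
    (d : ℝ) (hd : d = α * (α - 1) / (2 * Real.Gamma (3 - α)))
    (hA : Tendsto (fun n : ℕ => VarSeqR ν n / ((n : ℝ) ^ α * h n)) atTop (𝓝 1))
    (hbig : Tendsto (fun n : ℕ => (n : ℝ) ^ α * h n) atTop atTop)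
    (a' a b t : ℝ) (h0 : 0 < a') (haa : a' < a) (hab : a < b) (ht : 0 < t) (ht1 : t < 1) :
    ∀ᶠ n : ℕ in atTop,
      (1 - t) * (Ftl ν (a' / n) / ((n:ℝ) ^ (α - 2) * h n)) ≤ (1 + t) * (d * b ^ (2 - α)) + t ∧
      (1 - t) * (d * a' ^ (2 - α)) - t ≤ (1 + t) * (Ftl ν (b / n) / ((n:ℝ) ^ (α - 2) * h n)) := by
  have hα' := hα
  obtain ⟨hα1, hα2⟩ := hα
  have hGam : 0 < Real.Gamma (3 - α) := Real.Gamma_pos_of_pos (by linarith)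
  have hd0 : 0 < d := by
    rw [hd]; have : 0 < α - 1 := by linarith
    positivity
  have hβ : 0 < 2 - α := by linarith
  have hone : SlowlyVaryingAtTop (fun _ => (1:ℝ)) := by
    refine ⟨fun _ _ => one_pos, continuousOn_const, fun s _ => ?_⟩
    simp
  have hs0 := nuRef_supp (2 - α) d hβ
  have hF0 := nuRef_Ftl (2 - α) d hβ hd0
  have hB0 : Tendsto (fun x : ℝ => Ftl (nuRef (2 - α) d) x / (d * x ^ (2 - α) * (fun _ : ℝ => (1:ℝ)) (1/x)))
      (𝓝[>] (0:ℝ)) (𝓝 1) := by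
    refine tendsto_const_nhds.congr' ?_
    filter_upwards [Ioo_mem_nhdsGT (show (0:ℝ) < 1 from one_pos)] with x hx
    rw [hF0 x hx.1 hx.2.le]
    have : 0 < x ^ (2 - α) := Real.rpow_pos_of_pos hx.1 _
    simp only [mul_one]
    rw [div_self (by positivity)]
  have hA0 := abelian (nuRef (2 - α) d) hs0 α hα' _ hone d hd hB0
  have hbig0 : Tendsto (fun n : ℕ => (n : ℝ) ^ α * (fun _ : ℝ => (1:ℝ)) n) atTop atTop := by
    simp only [mul_one]
    exact (tendsto_rpow_atTop (by linarith)).comp tendsto_natCast_atTop_atTop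
  have hpos : ∀ n : ℕ, n ≥ 1 → ∀ γ : ℝ, 0 < (n:ℝ) ^ γ := fun n hn γ =>
    Real.rpow_pos_of_pos (by exact_mod_cast hn) _
  have hhpos : ∀ n : ℕ, n ≥ 1 → 0 < h n := fun n hn => hh.1 _ (by exact_mod_cast hn)
  have hlim := Lam_cont ν (nuRef (2 - α) d) hsupp hs0 (fun n => (n:ℝ) ^ α * h n)
    (fun n => (n:ℝ) ^ α * (fun _ : ℝ => (1:ℝ)) n)
    (fun n hn => mul_pos (hpos n hn _) (hhpos n hn))
    (fun n hn => mul_pos (hpos n hn _) one_pos) _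
    (Lam_moment ν hsupp α (by linarith) h hh hA hbig)
    (Lam_moment (nuRef (2 - α) d) hs0 α (by linarith) _ hone hA0 hbig0) (fcut a b) (fcut_cont a b)
  have hlim' := (Metric.tendsto_nhds.1 hlim) t ht
  obtain ⟨N, hN⟩ := exists_nat_ge b
  filter_upwards [hlim', cut_bounds ν hsupp a' a b t h0 haa hab ht ht1,
    cut_bounds (nuRef (2 - α) d) hs0 a' a b t h0 haa hab ht ht1, eventually_ge_atTop 1,
    eventually_ge_atTop N] with n h1 h2 h3 hn hnN
  rw [Lam_fcut _ _ _ hab, Lam_fcut _ _ _ hab, Real.dist_eq, sub_zero] at h1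
  set I := ∫ l in Set.Ioc (0:ℝ) 1, gcut a b (l ^ n) * (l * qd l ^ 2) ∂ν
  set J := ∫ l in Set.Ioc (0:ℝ) 1, gcut a b (l ^ n) * (l * qd l ^ 2) ∂(nuRef (2 - α) d)
  have hn0 : (0:ℝ) < n := by exact_mod_cast hn
  have hbn : b ≤ n := hN.trans (by exact_mod_cast hnN)
  have hp := hpos n hn (α - 2)
  have hhn := hhpos n hn
  have hsplit : (n:ℝ) ^ α = (n:ℝ) ^ 2 * (n:ℝ) ^ (α - 2) := by
    rw [← Real.rpow_natCast, ← Real.rpow_add hn0]; congr 1; push_cast; ring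
  set p := (n:ℝ) ^ (α - 2) with hpdef
  have e : 2 * (n:ℝ) ^ 2 * I / ((n:ℝ) ^ α * h n) - 2 * (n:ℝ) ^ 2 * J / ((n:ℝ) ^ α * (1:ℝ))
      = 2 * (I / (p * h n) - J / p) := by
    rw [hsplit]; field_simp
  rw [e, abs_lt] at h1
  have hF : ∀ c : ℝ, 0 < c → c ≤ n → Ftl (nuRef (2 - α) d) (c / n) / p = d * c ^ (2 - α) := by
    intro c hc hcn
    rw [hF0 _ (by positivity) ((div_le_one hn0).2 hcn), Real.div_rpow hc.le hn0.le]
    have : p = ((n:ℝ) ^ (2 - α))⁻¹ := by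
      rw [hpdef, ← Real.rpow_neg hn0.le]; congr 1; ring
    rw [this]
    have := hpos n hn (2 - α)
    field_simp
  have q : 0 < p * h n := mul_pos hp hhn
  have u1 : (1 - t) * (Ftl ν (a' / n) / (p * h n)) ≤ I / (p * h n) := by
    rw [← mul_div_assoc]; exact div_le_div_of_nonneg_right h2.1 q.le
  have u2 : I / (p * h n) ≤ (1 + t) * (Ftl ν (b / n) / (p * h n)) := by
    rw [← mul_div_assoc]; exact div_le_div_of_nonneg_right h2.2 q.le
  have u3 : (1 - t) * (d * a' ^ (2 - α)) ≤ J / p := by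
    rw [← hF a' h0 (by linarith), ← mul_div_assoc]; exact div_le_div_of_nonneg_right h3.1 hp.le
  have u4 : J / p ≤ (1 + t) * (d * b ^ (2 - α)) := by
    rw [← hF b (by linarith) hbn, ← mul_div_assoc]; exact div_le_div_of_nonneg_right h3.2 hp.le
  constructor <;> linarith [h1.1, h1.2]

lemma tauber_seq (ν : Measure ℝ) [IsFiniteMeasure ν]
    (hsupp : ν (Set.Icc (-1 : ℝ) 1)ᶜ = 0)
    (α : ℝ) (hα : α ∈ Set.Ioo (1:ℝ) 2)
    (h : ℝ → ℝ) (hh : SlowlyVaryingAtTop h)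
    (d : ℝ) (hd : d = α * (α - 1) / (2 * Real.Gamma (3 - α)))
    (hA : Tendsto (fun n : ℕ => VarSeqR ν n / ((n : ℝ) ^ α * h n)) atTop (𝓝 1))
    (hbig : Tendsto (fun n : ℕ => (n : ℝ) ^ α * h n) atTop atTop) :
    Tendsto (fun n : ℕ => Ftl ν (1 / n) / ((n:ℝ) ^ (α - 2) * h n)) atTop (𝓝 d) := by
  have key := tauber_sandwich ν hsupp α hα h hh d hd hA hbig
  have hβ : 0 < 2 - α := by linarith [hα.2]
  rw [tendsto_order]
  constructor
  · intro c hc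
    have hl : Tendsto (fun t : ℝ => ((1 - t) * (d * (1 - t) ^ (2 - α)) - t) / (1 + t)) (𝓝[>] 0) (𝓝 d) := by
      have : ContinuousAt (fun t : ℝ => ((1 - t) * (d * (1 - t) ^ (2 - α)) - t) / (1 + t)) 0 := by
        have : ContinuousAt (fun t : ℝ => (1 - t) ^ (2 - α)) 0 :=
          ContinuousAt.rpow_const (by fun_prop) (Or.inl (by norm_num))
        refine ContinuousAt.div (by fun_prop) (by fun_prop) (by norm_num)
      have h2 := this.tendsto
      simp only [sub_zero, Real.one_rpow, one_mul, mul_one, add_zero, div_one] at h2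
      exact h2.mono_left nhdsWithin_le_nhds
    obtain ⟨t, ht, ht0, ht1⟩ := ((hl.eventually (lt_mem_nhds hc)).and
      (Ioo_mem_nhdsGT (show (0:ℝ) < 1 from one_pos))).exists
    filter_upwards [key (1 - t) (1 - t/2) 1 t (by linarith) (by linarith) (by linarith) ht0 ht1]
      with n hn
    refine ht.trans_le ?_
    rw [div_le_iff₀ (by linarith)]
    linarith [hn.2]
  · intro c hc
    have hl : Tendsto (fun t : ℝ => ((1 + t) * (d * (1 + t) ^ (2 - α)) + t) / (1 - t)) (𝓝[>] 0) (𝓝 d) := by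
      have : ContinuousAt (fun t : ℝ => ((1 + t) * (d * (1 + t) ^ (2 - α)) + t) / (1 - t)) 0 := by
        have : ContinuousAt (fun t : ℝ => (1 + t) ^ (2 - α)) 0 :=
          ContinuousAt.rpow_const (by fun_prop) (Or.inl (by norm_num))
        refine ContinuousAt.div (by fun_prop) (by fun_prop) (by norm_num)
      have h2 := this.tendsto
      simp only [sub_zero, Real.one_rpow, one_mul, mul_one, add_zero, div_one] at h2
      exact h2.mono_left nhdsWithin_le_nhds
    obtain ⟨t, ht, ht0, ht1⟩ := ((hl.eventually (gt_mem_nhds hc)).and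
      (Ioo_mem_nhdsGT (show (0:ℝ) < 1 from one_pos))).exists
    filter_upwards [key 1 (1 + t/2) (1 + t) t (by linarith) (by linarith) (by linarith) ht0 ht1]
      with n hn
    refine lt_of_le_of_lt ?_ ht
    rw [le_div_iff₀ (by linarith)]
    linarith [hn.1]

lemma ratio_aux (α : ℝ) (h : ℝ → ℝ) (hh : SlowlyVaryingAtTop h) (v : ℝ → ℝ)
    (hv0 : ∀ t ≥ 1, 0 < v t)
    (hv : Tendsto (fun t => v t / t) atTop (𝓝 1)) :
    Tendsto (fun t => (v t ^ (α - 2) * h (v t)) / (t ^ (α - 2) * h t)) atTop (𝓝 1) := by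
  have h1 := sv_ratio h hh v id tendsto_id hv
  have h2 : Tendsto (fun t => (v t / t) ^ (α - 2)) atTop (𝓝 ((1:ℝ) ^ (α - 2))) :=
    hv.rpow_const (Or.inl one_ne_zero)
  rw [Real.one_rpow] at h2
  have h3 := h2.mul h1
  rw [one_mul] at h3
  refine h3.congr' ?_
  filter_upwards [eventually_ge_atTop 1] with t ht
  rw [Real.div_rpow (hv0 t ht).le (by linarith)]
  simp only [id]
  rw [div_mul_div_comm]

lemma passage (ν : Measure ℝ) [IsFiniteMeasure ν]
    (α : ℝ) (h : ℝ → ℝ) (hh : SlowlyVaryingAtTop h) (d : ℝ) (hd : 0 < d)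
    (hS : Tendsto (fun n : ℕ => Ftl ν (1 / n) / ((n:ℝ) ^ (α - 2) * h n)) atTop (𝓝 d)) :
    Tendsto (fun x : ℝ => Ftl ν x / (d * x ^ (2 - α) * h (1/x))) (𝓝[>] (0:ℝ)) (𝓝 1) := by
  have hfl : Tendsto (fun t : ℝ => ((⌊t⌋₊ : ℕ) : ℝ) / t) atTop (𝓝 1) := tendsto_nat_floor_div_atTop
  have hfl1 : Tendsto (fun t : ℝ => ((⌊t⌋₊ + 1 : ℕ) : ℝ) / t) atTop (𝓝 1) := by
    have := hfl.add (tendsto_inv_atTop_zero (𝕜 := ℝ))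
    rw [add_zero] at this
    refine this.congr fun t => ?_
    push_cast
    rw [add_div, one_div]
  have hp0 : ∀ t : ℝ, t ≥ 1 → (0:ℝ) < ((⌊t⌋₊ : ℕ) : ℝ) := fun t ht => by
    exact_mod_cast Nat.floor_pos.2 ht
  have hr0 := ratio_aux α h hh (fun t => ((⌊t⌋₊ : ℕ) : ℝ)) hp0 hfl
  have hr1 := ratio_aux α h hh (fun t => ((⌊t⌋₊ + 1 : ℕ) : ℝ)) (fun t _ => by positivity) hfl1
  have hf : Tendsto (fun t : ℝ => ⌊t⌋₊) atTop atTop := tendsto_nat_floor_atTop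
  have hf1 : Tendsto (fun t : ℝ => ⌊t⌋₊ + 1) atTop atTop := (tendsto_add_atTop_nat 1).comp hf
  have hpos : ∀ n : ℕ, n ≥ 1 → 0 < (n:ℝ) ^ (α - 2) * h n := fun n hn => by
    have : (0:ℝ) < n := by exact_mod_cast hn
    exact mul_pos (Real.rpow_pos_of_pos this _) (hh.1 _ this)
  have hU := (hS.comp hf).mul hr0
  have hL := (hS.comp hf1).mul hr1
  rw [mul_one] at hU hL
  have hT : Tendsto (fun t : ℝ => Ftl ν (1 / t) / (t ^ (α - 2) * h t)) atTop (𝓝 d) := by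
    refine tendsto_of_tendsto_of_tendsto_of_le_of_le' hL hU ?_ ?_
    · filter_upwards [eventually_ge_atTop 1] with t ht
      have ht0 : 0 < t := by linarith
      have hq : 0 < t ^ (α - 2) * h t := mul_pos (Real.rpow_pos_of_pos ht0 _) (hh.1 _ ht0)
      have := hpos (⌊t⌋₊ + 1) (by omega)
      simp only [Function.comp]
      rw [div_mul_div_cancel₀ this.ne']
      refine div_le_div_of_nonneg_right (Ftl_mono ν ?_) hq.le
      refine one_div_le_one_div_of_le ht0 ?_
      push_cast
      exact (Nat.lt_floor_add_one t).le
    · filter_upwards [eventually_ge_atTop 1] with t ht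
      have ht0 : 0 < t := by linarith
      have hq : 0 < t ^ (α - 2) * h t := mul_pos (Real.rpow_pos_of_pos ht0 _) (hh.1 _ ht0)
      have := hpos (⌊t⌋₊) (Nat.floor_pos.2 ht)
      simp only [Function.comp]
      rw [div_mul_div_cancel₀ this.ne']
      refine div_le_div_of_nonneg_right (Ftl_mono ν ?_) hq.le
      exact one_div_le_one_div_of_le (hp0 t ht) (Nat.floor_le ht0.le)
  have hT2 := (hT.comp tendsto_inv_nhdsGT_zero).div_const d
  rw [div_self hd.ne'] at hT2
  refine hT2.congr' ?_
  filter_upwards [self_mem_nhdsWithin] with x hx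
  have hx : 0 < x := hx
  simp only [Function.comp, one_div, inv_inv]
  rw [Real.inv_rpow hx.le, ← Real.rpow_neg hx.le, neg_sub, div_div]
  congr 1; ring

lemma big_of_inf (V b : ℕ → ℝ) (hinf : Tendsto (fun n : ℕ => V n / (n : ℝ)) atTop atTop)
    (hb : ∀ n ≥ 1, 0 < b n)
    (hA : Tendsto (fun n : ℕ => V n / b n) atTop (𝓝 1)) : Tendsto b atTop atTop := by
  have hcast : Tendsto (fun n : ℕ => (n:ℝ) / 2) atTop atTop :=
    tendsto_natCast_atTop_atTop.atTop_div_const (by norm_num)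
  refine tendsto_atTop_mono' _ ?_ hcast
  filter_upwards [hinf.eventually_ge_atTop 1, hA.eventually (gt_mem_nhds (show (1:ℝ) < 2 by norm_num)),
    eventually_ge_atTop 1] with n h1 h2 hn
  have hn0 : (0:ℝ) < n := by exact_mod_cast hn
  rw [le_div_iff₀ hn0] at h1
  rw [div_lt_iff₀ (hb n hn)] at h2
  linarith

/-- **Theorem 2.7 (second part).**  Let `ν` be a finite measure on `[-1,1]`
(transition spectral measure of a reversible Markov chain) with
`Var_n/n → ∞`.  For `α ∈ (1,2)`, `h` slowly varying and
`d_α = α(α-1)/(2Γ(3-α))`: `Var_n ~ n^α h(n)` as `n → ∞` iff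
`ν((1-x,1]) ~ d_α x^{2-α} h(1/x)` as `x → 0⁺`. -/
theorem reversible_variance_iff_nu_tail_regularly_varying
    (ν : Measure ℝ) [IsFiniteMeasure ν]
    (hsupp : ν (Set.Icc (-1 : ℝ) 1)ᶜ = 0)
    (hinf : Tendsto (fun n : ℕ => VarSeqR ν n / (n : ℝ)) atTop atTop)
    (α : ℝ) (hα : α ∈ Set.Ioo (1:ℝ) 2)
    (h : ℝ → ℝ) (hh : SlowlyVaryingAtTop h)
    (d : ℝ) (hd : d = α * (α - 1) / (2 * Real.Gamma (3 - α))) :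
    Tendsto (fun n : ℕ => VarSeqR ν n / ((n : ℝ) ^ α * h n)) atTop (𝓝 1) ↔
      Tendsto (fun x : ℝ => (ν (Set.Ioc (1 - x) 1)).toReal / (d * x ^ (2 - α) * h (1/x)))
        (𝓝[>] (0:ℝ)) (𝓝 1) := by
  have hd0 : 0 < d := by
    have hGam : 0 < Real.Gamma (3 - α) := Real.Gamma_pos_of_pos (by linarith [hα.2])
    rw [hd]
    have : 0 < α - 1 := by linarith [hα.1]
    have : 0 < α := by linarith [hα.1]
    positivity
  constructor
  · intro hA
    have hbig := big_of_inf (VarSeqR ν) (fun n : ℕ => (n : ℝ) ^ α * h n) hinf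
      (fun n hn => by
        have : (0:ℝ) < n := by exact_mod_cast hn
        exact mul_pos (Real.rpow_pos_of_pos this _) (hh.1 _ this)) hA
    exact passage ν α h hh d hd0 (tauber_seq ν hsupp α hα h hh d hd hA hbig)
  · intro hB
    exact abelian ν hsupp α hα h hh d hd hB
end

section
/- The following are equivalent: (i) Var(T)/T converges to a finite limit L as T → ∞; (ii) ς² < ∞ and there is a constant C ≥ 0 with ν(U_x)/x → C as x → 0⁺. In that case L = ς² + π·C. -/
open MeasureTheory Filter Topology Set

/-- The continuous-time variance
`Var(T) = 2 ∫_{H⁻} Re[(e^{zT}-zT-1)/z²] ν(dz)`. -/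
noncomputable def VarCt (ν : Measure ℂ) (T : ℝ) : ℝ :=
  2 * ∫ z, ((Complex.exp (z * (T : ℂ)) - z * (T : ℂ) - 1) / z ^ 2).re ∂ν

/-- `ς² = -2 ∫_{H⁻} Re(1/z) ν(dz) ∈ [0,∞]`. -/
noncomputable def varsigmaSq (ν : Measure ℂ) : ENNReal :=
  2 * ∫⁻ z, ENNReal.ofReal (-(z⁻¹.re)) ∂ν

/-- `U_x = {a + ib : 0 ≤ -a ≤ |b| ≤ x}`. -/
def UsetCt (x : ℝ) : Set ℂ :=
  {z : ℂ | 0 ≤ -z.re ∧ -z.re ≤ |z.im| ∧ |z.im| ≤ x}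


lemma gauss_cos (u : ℝ) :
    ∫ s : ℝ, Real.cos (u * s) * Real.exp (-(s^2/4)) = 2 * √Real.pi * Real.exp (-u^2) := by
  have h := fourierIntegral_gaussian (b := (1/4:ℂ)) (by norm_num) (u : ℂ)
  have e1 : ∀ s : ℝ, Real.cos (u * s) * Real.exp (-(s^2/4)) =
     (Complex.exp (Complex.I * u * s) * Complex.exp (-(1/4) * (s:ℂ)^2)).re := by
    intro s
    have h1 : Complex.I * u * s = ((u*s:ℝ):ℂ) * Complex.I := by push_cast; ring
    have h2 : (-(1/4) * (s:ℂ)^2) = ((-(s^2/4):ℝ):ℂ) := by push_cast; ring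
    rw [h1, h2, ← Complex.ofReal_exp, Complex.re_mul_ofReal, Complex.exp_ofReal_mul_I_re]
  have hint : Integrable (fun s : ℝ => Complex.exp (Complex.I * u * s) * Complex.exp (-(1/4) * (s:ℂ)^2)) := by
    have := GaussianFourier.integrable_cexp_neg_mul_sq_add_real_mul_I (b := (1/4:ℂ)) (by norm_num) 0
    have h3 : Integrable (fun s : ℝ => Complex.exp (-(1/4) * (s:ℂ)^2)) := by simpa using this
    refine h3.bdd_mul (c := 1) (by fun_prop) (Eventually.of_forall fun s => ?_)
    have h1 : Complex.I * u * s = ((u*s:ℝ):ℂ) * Complex.I := by push_cast; ring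
    rw [h1, Complex.norm_exp_ofReal_mul_I]
  simp_rw [e1]
  have := integral_re hint
  simp only [RCLike.re_to_complex] at this
  rw [this, h]
  have h4 : ((Real.pi:ℂ) / (1/4)) = ((4 * Real.pi : ℝ) : ℂ) := by push_cast; ring
  have h5 : -(u:ℂ)^2 / (4 * (1/4)) = ((-u^2 : ℝ):ℂ) := by push_cast; ring
  have h6 : (1/2:ℂ) = ((1/2:ℝ):ℂ) := by push_cast; ring
  rw [h4, h5]
  rw [h6, ← Complex.ofReal_cpow (by positivity), ← Complex.ofReal_exp, ← Complex.ofReal_mul, Complex.ofReal_re, ← Real.sqrt_eq_rpow, Real.sqrt_mul (by norm_num)]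
  rw [show (4:ℝ) = 2^2 by norm_num, Real.sqrt_sq (by norm_num)]

lemma int_gauss : Integrable (fun s : ℝ => Real.exp (-(s^2/4))) := by
  have := integrable_exp_neg_mul_sq (b := 1/4) (by norm_num)
  refine this.congr (Eventually.of_forall fun s => ?_)
  simp only; congr 1; ring

lemma int_abs_pow_gauss (n : ℕ) : Integrable (fun s : ℝ => |s|^n * Real.exp (-(s^2/4))) := by
  have := integrable_rpow_mul_exp_neg_mul_sq (b := 1/4) (by norm_num) (s := n) (by have : (0:ℝ) ≤ n := by positivity
                                                                                   linarith)
  refine this.norm.congr (Eventually.of_forall fun s => ?_)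
  simp only [Real.rpow_natCast, norm_mul, Real.norm_eq_abs, abs_pow, Real.abs_exp]
  congr 2; ring

/-- second derivative of the gaussian -/
noncomputable def gphi (s : ℝ) : ℝ := (s^2/4 - 1/2) * Real.exp (-(s^2/4))

lemma hd_g (s : ℝ) : HasDerivAt (fun s : ℝ => Real.exp (-(s^2/4))) (-(s/2) * Real.exp (-(s^2/4))) s := by
  have : HasDerivAt (fun s : ℝ => -(s^2/4)) (-(s/2)) s := by
    have := ((hasDerivAt_pow 2 s).div_const 4).neg
    exact this.congr_deriv (by norm_num; ring)
  exact this.exp.congr_deriv (by ring)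

lemma hd_g' (s : ℝ) : HasDerivAt (fun s : ℝ => -(s/2) * Real.exp (-(s^2/4))) (gphi s) s := by
  have h1 : HasDerivAt (fun s : ℝ => -(s/2)) (-(1/2)) s := ((hasDerivAt_id s).div_const 2).neg
  exact (h1.mul (hd_g s)).congr_deriv (by unfold gphi; ring)

lemma tend_pow_gauss (n : ℕ) : Tendsto (fun s : ℝ => |s|^n * Real.exp (-(s^2/4))) (cocompact ℝ) (𝓝 0) := by
  have := tendsto_rpow_abs_mul_exp_neg_mul_sq_cocompact (a := 1/4) (by norm_num) n
  refine this.congr fun s => ?_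
  rw [Real.rpow_natCast]; congr 2; ring

lemma int_abs_gphi : Integrable (fun s : ℝ => |s| * gphi s) := by
  have := ((int_abs_pow_gauss 3).const_mul (1/4)).sub ((int_abs_pow_gauss 1).const_mul (1/2))
  refine this.congr (Eventually.of_forall fun s => ?_)
  simp only [gphi, Pi.sub_apply]
  have : s^2 = |s|^2 := (sq_abs s).symm
  rw [this]; ring

lemma int_gphi : Integrable gphi := by
  have := ((int_abs_pow_gauss 2).const_mul (1/4)).sub ((int_abs_pow_gauss 0).const_mul (1/2))
  refine this.congr (Eventually.of_forall fun s => ?_)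
  simp only [gphi, Pi.sub_apply]
  have : s^2 = |s|^2 := (sq_abs s).symm
  rw [this]; ring

lemma integral_abs_gphi : ∫ s : ℝ, |s| * gphi s = 2 := by
  have h1 : ∫ s : ℝ, |s| * gphi s = 2 * ∫ s in Ioi (0:ℝ), s * gphi s := by
    rw [← integral_comp_abs (f := fun s => s * gphi s)]
    congr 1; ext s; simp [gphi]
  rw [h1]
  have h2 := integral_Ioi_of_hasDerivAt_of_tendsto (a := (0:ℝ)) (m := 0)
    (f := fun s : ℝ => s * (-(s/2) * Real.exp (-(s^2/4))) - Real.exp (-(s^2/4)))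
    (f' := fun s => s * gphi s) ?_ ?_ ?_ ?_
  · rw [h2]; norm_num
  · apply Continuous.continuousWithinAt; fun_prop
  · intro s _
    exact (((hasDerivAt_id s).mul (hd_g' s)).sub (hd_g s)).congr_deriv (by simp)
  · refine (int_abs_gphi.integrableOn (s := Ioi 0)).congr_fun ?_ measurableSet_Ioi
    intro s hs; simp only; rw [abs_of_pos hs]
  · have h3 := ((tend_pow_gauss 2).const_mul (-1/2)).sub (tend_pow_gauss 0)
    have h4 : Tendsto (fun s:ℝ => s) atTop (cocompact ℝ) := atTop_le_cocompact
    have := h3.comp h4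
    simp only [mul_zero, sub_zero] at this
    refine this.congr fun s => ?_
    simp; ring

lemma integral_cos_gphi (u : ℝ) : ∫ s : ℝ, (1 - Real.cos (u * s)) * gphi s = u^2 * (2 * √Real.pi * Real.exp (-u^2)) := by
  have hI1 : Integrable (fun s : ℝ => (1 - Real.cos (u * s)) * gphi s) := by
    refine int_gphi.bdd_mul (c := 2) (by fun_prop) (Eventually.of_forall fun s => ?_)
    rw [Real.norm_eq_abs, abs_le]
    constructor <;> linarith [Real.neg_one_le_cos (u*s), Real.cos_le_one (u*s)]
  have hI2 : Integrable (fun s : ℝ => Real.cos (u * s) * Real.exp (-(s^2/4))) := by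
    refine int_gauss.bdd_mul (c := 1) (by fun_prop) (Eventually.of_forall fun s => ?_)
    exact Real.abs_cos_le_one _
  have hb : ∀ l : Filter ℝ, l ≤ cocompact ℝ → Tendsto (fun s : ℝ => (1 - Real.cos (u * s)) * (-(s/2) * Real.exp (-(s^2/4))) - u * Real.sin (u * s) * Real.exp (-(s^2/4))) l (𝓝 0) := by
    intro l hl
    have h3 := (((tend_pow_gauss 1).const_mul (1)).add ((tend_pow_gauss 0).const_mul |u|)).mono_left hl
    simp only [mul_zero, add_zero] at h3
    refine squeeze_zero_norm (fun s => ?_) h3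
    refine (norm_sub_le _ _).trans (add_le_add ?_ ?_)
    · rw [norm_mul, norm_mul]
      simp only [Real.norm_eq_abs, Real.abs_exp, abs_neg, abs_div]
      have : |1 - Real.cos (u*s)| ≤ 2 := by
        rw [abs_le]
        constructor <;> linarith [Real.neg_one_le_cos (u*s), Real.cos_le_one (u*s)]
      have h5 : 0 ≤ |s| * Real.exp (-(s^2/4)) := by positivity
      rw [abs_two]
      nlinarith
    · rw [norm_mul, norm_mul]
      simp only [Real.norm_eq_abs, Real.abs_exp]
      have := Real.abs_sin_le_one (u*s)
      simp only [pow_zero, one_mul]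
      rw [mul_assoc]
      gcongr
      nlinarith [Real.exp_pos (-(s^2/4))]
  have h := integral_of_hasDerivAt_of_tendsto (m := 0) (n := 0)
    (f := fun s : ℝ => (1 - Real.cos (u * s)) * (-(s/2) * Real.exp (-(s^2/4))) - u * Real.sin (u * s) * Real.exp (-(s^2/4)))
    (f' := fun s => (1 - Real.cos (u * s)) * gphi s - u^2 * (Real.cos (u * s) * Real.exp (-(s^2/4)))) ?_ ?_
    (hb _ (atBot_le_cocompact)) (hb _ atTop_le_cocompact)
  · rw [integral_sub hI1 (hI2.const_mul _), integral_const_mul, gauss_cos] at h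
    linarith
  · intro s
    have hu : HasDerivAt (fun s : ℝ => u * s) u s := by simpa using (hasDerivAt_id s).const_mul u
    have h1 : HasDerivAt (fun s : ℝ => 1 - Real.cos (u * s)) (u * Real.sin (u*s)) s := by
      exact ((hu.cos).const_sub 1).congr_deriv (by ring)
    have h2 : HasDerivAt (fun s : ℝ => u * Real.sin (u * s)) (u * (Real.cos (u*s) * u)) s := hu.sin.const_mul u
    exact ((h1.mul (hd_g' s)).sub (h2.mul (hd_g s))).congr_deriv (by ring)
  · exact hI1.sub (hI2.const_mul _)

lemma sinc_sq_mul (x : ℝ) : x^2 * Real.sinc (x/2)^2 = 2 * (1 - Real.cos x) := by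
  by_cases hx : x = 0
  · simp [hx]
  · rw [Real.sinc_of_ne_zero (by positivity)]
    have : Real.cos x = 1 - 2 * Real.sin (x/2)^2 := by
      have := Real.cos_sq' (x/2)
      have h2 := Real.cos_two_mul (x/2)
      rw [show 2 * (x/2) = x by ring] at h2
      linarith
    rw [this]; field_simp; ring

lemma sinc_sq_le_one (x : ℝ) : Real.sinc x ^ 2 ≤ 1 := by
  have := Real.abs_sinc_le_one x
  rw [← sq_abs]; exact pow_le_one₀ (abs_nonneg _) this

lemma integral_sinc_gphi (u : ℝ) (hu : u ≠ 0) :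
    ∫ s : ℝ, s^2 * gphi s * Real.sinc (u * s / 2)^2 = 4 * √Real.pi * Real.exp (-u^2) := by
  have : ∀ s : ℝ, s^2 * gphi s * Real.sinc (u * s / 2)^2 = 2 / u^2 * ((1 - Real.cos (u * s)) * gphi s) := by
    intro s
    have := sinc_sq_mul (u * s)
    have h2 : s^2 * gphi s * Real.sinc (u * s / 2)^2 = gphi s / u^2 * ((u * s)^2 * Real.sinc (u * s / 2)^2) := by
      field_simp
    rw [h2, this]; ring
  simp_rw [this]
  rw [integral_const_mul, integral_cos_gphi]
  field_simp; ring

lemma int_sq_gphi : Integrable (fun s : ℝ => s^2 * gphi s) := by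
  have := ((int_abs_pow_gauss 4).const_mul (1/4)).sub ((int_abs_pow_gauss 2).const_mul (1/2))
  refine this.congr (Eventually.of_forall fun s => ?_)
  simp only [gphi, Pi.sub_apply]
  have : s^2 = |s|^2 := (sq_abs s).symm
  rw [this]; ring

/-- the Fejer type average -/
noncomputable def Wf (μ : Measure ℝ) (T : ℝ) : ℝ := |T| * ∫ b, Real.sinc (b * T / 2)^2 ∂μ

lemma int_sinc (μ : Measure ℝ) [IsFiniteMeasure μ] (T : ℝ) : Integrable (fun b => Real.sinc (b * T / 2)^2) μ := by
  refine (integrable_const (1:ℝ)).mono' ?_ (Eventually.of_forall fun b => ?_)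
  · exact (((Real.continuous_sinc.comp (by fun_prop : Continuous fun b : ℝ => b * T / 2))).pow 2).aestronglyMeasurable
  · rw [Real.norm_of_nonneg (sq_nonneg _)]; exact sinc_sq_le_one _

lemma Wf_average (μ : Measure ℝ) [IsFiniteMeasure μ] (h0 : μ (Iic 0) = 0) (T : ℝ) (hT : 0 < T) :
    ∫ s : ℝ, |s| * gphi s * Wf μ (T * s) = 4 * √Real.pi * (T * ∫ b, Real.exp (-(b*T)^2) ∂μ) := by
  have e1 : ∀ s : ℝ, |s| * gphi s * Wf μ (T * s) = T * ∫ b, s^2 * gphi s * Real.sinc (b * T * s / 2)^2 ∂μ := by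
    intro s
    rw [integral_const_mul, Wf, abs_mul, abs_of_pos hT]
    simp_rw [← mul_assoc]
    rw [← sq_abs s]; ring
  simp_rw [e1]
  rw [integral_const_mul, integral_integral_swap]
  · have : ∀ᵐ b ∂μ, ∫ s : ℝ, s^2 * gphi s * Real.sinc (b * T * s / 2)^2 = 4 * √Real.pi * Real.exp (-(b*T)^2) := by
      have hb : ∀ᵐ b ∂μ, b ∉ Iic (0:ℝ) := measure_eq_zero_iff_ae_notMem.1 h0
      filter_upwards [hb] with b hb
      have hb : 0 < b := by simpa using hb
      exact integral_sinc_gphi _ (by positivity)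
    rw [integral_congr_ae this, integral_const_mul]; ring
  · have h1 : Integrable (fun p : ℝ × ℝ => p.1^2 * gphi p.1) (volume.prod μ) := int_sq_gphi.comp_fst μ
    have h2 : Continuous (fun p : ℝ × ℝ => Real.sinc (p.2 * T * p.1 / 2)^2) :=
      (Real.continuous_sinc.comp (by fun_prop : Continuous fun p : ℝ × ℝ => p.2 * T * p.1 / 2)).pow 2
    exact h1.mul_bdd (c := 1) h2.aestronglyMeasurable (Eventually.of_forall fun p => by
      rw [Real.norm_of_nonneg (sq_nonneg _)]; exact sinc_sq_le_one _)

lemma Wf_nonneg (μ : Measure ℝ) (T : ℝ) : 0 ≤ Wf μ T :=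
  mul_nonneg (abs_nonneg _) (integral_nonneg fun _ => sq_nonneg _)

lemma Wf_le (μ : Measure ℝ) [IsFiniteMeasure μ] (T : ℝ) : Wf μ T ≤ |T| * μ.real univ := by
  refine mul_le_mul_of_nonneg_left ?_ (abs_nonneg _)
  refine (integral_mono (int_sinc μ T) (integrable_const (1:ℝ)) fun b => sinc_sq_le_one _).trans ?_
  simp

lemma Wf_abs (μ : Measure ℝ) (T : ℝ) : Wf μ |T| = Wf μ T := by
  unfold Wf
  rw [abs_abs]
  congr 1
  rcases abs_choice T with h | h <;> rw [h]
  congr 1; ext b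
  rw [← Real.sinc_neg]; congr 2; ring

lemma Wf_meas (μ : Measure ℝ) [IsFiniteMeasure μ] : Continuous (Wf μ) := by
  unfold Wf
  refine continuous_abs.mul ?_
  refine continuous_of_dominated (bound := fun _ => 1) ?_ ?_ (integrable_const _) ?_
  · intro T; exact (int_sinc μ T).aestronglyMeasurable
  · intro T; exact Eventually.of_forall fun b => by
      rw [Real.norm_of_nonneg (sq_nonneg _)]; exact sinc_sq_le_one _
  · exact Eventually.of_forall fun b => 
      (Real.continuous_sinc.comp (by fun_prop : Continuous fun T : ℝ => b * T / 2)).pow 2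

lemma gauss_limit (μ : Measure ℝ) [IsFiniteMeasure μ] (h0 : μ (Iic 0) = 0) (K : ℝ)
    (hW : Tendsto (Wf μ) atTop (𝓝 K)) :
    Tendsto (fun T : ℝ => T * ∫ b, Real.exp (-(b*T)^2) ∂μ) atTop (𝓝 (K / (2 * √Real.pi))) := by
  obtain ⟨B, hB⟩ : ∃ B, ∀ T, Wf μ T ≤ B := by
    have : ∀ᶠ T in atTop, Wf μ T ≤ K + 1 := hW.eventually (eventually_le_nhds (by linarith))
    obtain ⟨T0, hT0⟩ := eventually_atTop.1 this
    refine ⟨max (K+1) (|T0| * μ.real univ), fun T => ?_⟩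
    rw [← Wf_abs]
    rcases le_total T0 |T| with h | h
    · exact (hT0 _ h).trans (le_max_left _ _)
    · refine ((Wf_le μ _).trans ?_).trans (le_max_right _ _)
      rw [abs_abs]
      exact mul_le_mul_of_nonneg_right (h.trans (le_abs_self _)) measureReal_nonneg
  have h1 : Tendsto (fun T : ℝ => ∫ s : ℝ, |s| * gphi s * Wf μ (T * s)) atTop (𝓝 (∫ s : ℝ, |s| * gphi s * K)) := by
    refine tendsto_integral_filter_of_dominated_convergence (fun s => ‖|s| * gphi s‖ * B) ?_ ?_ ?_ ?_
    · refine Eventually.of_forall fun T => int_abs_gphi.aestronglyMeasurable.mul ?_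
      exact ((Wf_meas μ).comp (by fun_prop : Continuous fun s : ℝ => T * s)).aestronglyMeasurable
    · refine Eventually.of_forall fun T => Eventually.of_forall fun s => ?_
      rw [norm_mul, Real.norm_of_nonneg (Wf_nonneg μ _)]
      gcongr
      exact hB _
    · exact int_abs_gphi.norm.mul_const _
    · have : ∀ᵐ s : ℝ, s ≠ 0 := by simp [ae_iff]
      filter_upwards [this] with s hs
      refine Tendsto.const_mul _ ?_
      have : Tendsto (fun T : ℝ => T * |s|) atTop atTop := tendsto_id.atTop_mul_const (abs_pos.2 hs)
      refine (hW.comp this).congr' ?_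
      filter_upwards [eventually_gt_atTop 0] with T hT
      simp only [Function.comp]
      rw [← Wf_abs μ (T*s), abs_mul, abs_of_pos hT]
  rw [integral_mul_const, integral_abs_gphi] at h1
  have h2 := h1.div_const (4 * √Real.pi)
  have hpi : 0 < √Real.pi := Real.sqrt_pos.2 Real.pi_pos
  rw [show 2 * K / (4 * √Real.pi) = K / (2 * √Real.pi) by field_simp; ring] at h2
  refine h2.congr' ?_
  filter_upwards [eventually_gt_atTop 0] with T hT
  rw [Wf_average μ h0 T hT]; field_simp

lemma int_cont_bdd (μ : Measure ℝ) [IsFiniteMeasure μ] (f : ℝ → ℝ) (hf : Continuous f) (T : ℝ) :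
    Integrable (fun b => Real.exp (-(b*T)^2) * f (Real.exp (-(b*T)^2))) μ := by
  have hc : Continuous (fun y => y * f y) := continuous_id.mul hf
  obtain ⟨M, hM⟩ := isCompact_Icc.exists_bound_of_continuousOn (s := Icc (0:ℝ) 1) hc.continuousOn
  refine (integrable_const M).mono' ?_ (Eventually.of_forall fun b => ?_)
  · exact (hc.comp (by fun_prop : Continuous fun b : ℝ => Real.exp (-(b*T)^2))).aestronglyMeasurable
  · exact hM _ ⟨(Real.exp_pos _).le, Real.exp_le_one_iff.2 (by nlinarith [sq_nonneg (b*T)])⟩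

lemma int_cont_leb (f : ℝ → ℝ) (hf : Continuous f) :
    IntegrableOn (fun u => Real.exp (-u^2) * f (Real.exp (-u^2))) (Ioi 0) := by
  obtain ⟨M, hM⟩ := isCompact_Icc.exists_bound_of_continuousOn (s := Icc (0:ℝ) 1) hf.continuousOn
  have h := (integrable_exp_neg_mul_sq (b := 1) one_pos).integrableOn (s := Ioi (0:ℝ))
  simp only [neg_mul, one_mul] at h
  refine Integrable.mul_bdd (c := M) h ?_ (Eventually.of_forall fun b => ?_)
  · exact (hf.comp (by fun_prop : Continuous fun b : ℝ => Real.exp (-b^2))).aestronglyMeasurable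
  · exact hM _ ⟨(Real.exp_pos _).le, Real.exp_le_one_iff.2 (by nlinarith [sq_nonneg b])⟩

lemma karamata_poly (μ : Measure ℝ) [IsFiniteMeasure μ] (C : ℝ)
    (hP : Tendsto (fun T : ℝ => T * ∫ b, Real.exp (-(b*T)^2) ∂μ) atTop (𝓝 (C * (√Real.pi / 2)))) (q : Polynomial ℝ) :
    Tendsto (fun T : ℝ => T * ∫ b, Real.exp (-(b*T)^2) * q.eval (Real.exp (-(b*T)^2)) ∂μ) atTop
      (𝓝 (C * ∫ u in Ioi (0:ℝ), Real.exp (-u^2) * q.eval (Real.exp (-u^2)))) := by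
  induction q using Polynomial.induction_on' with
  | add p q hp hq =>
    have := hp.add hq
    rw [← mul_add, ← integral_add (int_cont_leb _ p.continuous) (int_cont_leb _ q.continuous)] at this
    simp only [Polynomial.eval_add, mul_add (Real.exp _)]
    refine this.congr fun T => ?_
    rw [← mul_add, ← integral_add (int_cont_bdd μ _ p.continuous T) (int_cont_bdd μ _ q.continuous T)]
  | monomial n a =>
    have hn : (0:ℝ) < √(n+1) := Real.sqrt_pos.2 (by positivity)
    have e : ∀ x : ℝ, Real.exp (-x^2) * (Polynomial.monomial n a).eval (Real.exp (-x^2)) = a * Real.exp (-(n+1) * x^2) := by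
      intro x
      rw [Polynomial.eval_monomial, ← Real.exp_nat_mul]
      rw [mul_left_comm, ← Real.exp_add]; congr 2; ring
    simp only [e, integral_const_mul]
    rw [integral_gaussian_Ioi]
    have h1 : Tendsto (fun T : ℝ => T * √(n+1)) atTop atTop := tendsto_id.atTop_mul_const hn
    have h2 := (hP.comp h1).const_mul (a / √(n+1))
    rw [Real.sqrt_div Real.pi_pos.le]
    convert h2 using 1
    · ext T
      simp only [Function.comp]
      have : ∀ b : ℝ, -(b * (T * √(n+1)))^2 = -(n+1) * (b*T)^2 := by
        intro b
        have := Real.sq_sqrt (show (0:ℝ) ≤ n + 1 by positivity)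
        linear_combination -(b*T)^2 * this
      simp only [this]
      field_simp
    · congr 1; field_simp

lemma karamata_cont (μ : Measure ℝ) [IsFiniteMeasure μ] (C : ℝ) (hC : 0 ≤ C)
    (hP : Tendsto (fun T : ℝ => T * ∫ b, Real.exp (-(b*T)^2) ∂μ) atTop (𝓝 (C * (√Real.pi / 2)))) 
    (f : ℝ → ℝ) (hf : Continuous f) :
    Tendsto (fun T : ℝ => T * ∫ b, Real.exp (-(b*T)^2) * f (Real.exp (-(b*T)^2)) ∂μ) atTop
      (𝓝 (C * ∫ u in Ioi (0:ℝ), Real.exp (-u^2) * f (Real.exp (-u^2)))) := by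
  set A := C * (√Real.pi / 2) with hA
  have hA0 : 0 ≤ A := by positivity
  rw [Metric.tendsto_nhds]
  intro ε hε
  set δ := ε / (3 * (A + 1)) with hδ
  have hδ0 : 0 < δ := by positivity
  obtain ⟨q, hq⟩ := exists_polynomial_near_of_continuousOn 0 1 f hf.continuousOn δ hδ0
  have hmem : ∀ x : ℝ, Real.exp (-x^2) ∈ Icc (0:ℝ) 1 := fun x =>
    ⟨(Real.exp_pos _).le, Real.exp_le_one_iff.2 (by nlinarith [sq_nonneg x])⟩
  have hG1 : ∀ T, Integrable (fun b => Real.exp (-(b*T)^2)) μ := fun T => by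
    simpa using int_cont_bdd μ (fun _ => 1) continuous_const T
  have hG2 : IntegrableOn (fun u => Real.exp (-u^2)) (Ioi (0:ℝ)) := by
    simpa using int_cont_leb (fun _ => 1) continuous_const
  have hpt : ∀ x : ℝ, ‖Real.exp (-x^2) * f (Real.exp (-x^2)) - Real.exp (-x^2) * q.eval (Real.exp (-x^2))‖ ≤ δ * Real.exp (-x^2) := by
    intro x
    rw [← mul_sub, norm_mul, Real.norm_of_nonneg (hmem x).1, mul_comm, Real.norm_eq_abs, abs_sub_comm]
    exact mul_le_mul_of_nonneg_right (hq _ (hmem x)).le (hmem x).1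
  have hL : |C * ∫ u in Ioi (0:ℝ), Real.exp (-u^2) * f (Real.exp (-u^2)) - Real.exp (-u^2) * q.eval (Real.exp (-u^2))| ≤ δ * A := by
    have := norm_integral_le_of_norm_le (hG2.const_mul δ) (Eventually.of_forall hpt)
    rw [integral_const_mul] at this
    have hg := integral_gaussian_Ioi 1
    simp only [neg_mul, one_mul, div_one] at hg
    rw [hg, Real.norm_eq_abs] at this
    rw [abs_mul, abs_of_nonneg hC, hA]
    calc _ ≤ C * (δ * (√Real.pi / 2)) := by gcongr
      _ = _ := by ring
  rw [integral_sub (int_cont_leb f hf) (int_cont_leb _ q.continuous)] at hL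
  have hq2 := karamata_poly μ C hP q
  have hev1 := (Metric.tendsto_nhds.1 hq2) (ε/3) (by positivity)
  have hev2 : ∀ᶠ T : ℝ in atTop, T * ∫ b, Real.exp (-(b*T)^2) ∂μ < A + 1 := hP.eventually (eventually_lt_nhds (by linarith))
  filter_upwards [hev1, hev2, eventually_gt_atTop 0] with T h1 h2 hT
  have hJ : |T * ∫ b, Real.exp (-(b*T)^2) * f (Real.exp (-(b*T)^2)) - Real.exp (-(b*T)^2) * q.eval (Real.exp (-(b*T)^2)) ∂μ| ≤ δ * (A+1) := by
    have := norm_integral_le_of_norm_le ((hG1 T).const_mul δ) (Eventually.of_forall fun b => hpt (b*T))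
    rw [integral_const_mul, Real.norm_eq_abs] at this
    rw [abs_mul, abs_of_pos hT]
    calc _ ≤ T * (δ * ∫ b, Real.exp (-(b*T)^2) ∂μ) := by gcongr
      _ = δ * (T * ∫ b, Real.exp (-(b*T)^2) ∂μ) := by ring
      _ ≤ _ := by gcongr
  rw [integral_sub (int_cont_bdd μ f hf T) (int_cont_bdd μ _ q.continuous T)] at hJ
  rw [Real.dist_eq] at h1 ⊢
  have hδA : δ * (A+1) = ε/3 := by rw [hδ]; field_simp
  have hδA' : δ * A ≤ ε/3 := by nlinarith
  rw [mul_sub] at hJ hL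
  rw [abs_lt] at *
  rw [abs_le] at hJ hL
  constructor <;> linarith [hJ.1, hJ.2, hL.1, hL.2, h1.1, h1.2]

lemma ramp_exists (θ η : ℝ) (h0 : 0 < θ) (h : θ < η) : ∃ f : ℝ → ℝ, Continuous f ∧
    (∀ u, 0 ≤ Real.exp (-u^2) * f (Real.exp (-u^2))) ∧
    (∀ u, Real.exp (-u^2) * f (Real.exp (-u^2)) ≤ 1) ∧
    (∀ u, 0 ≤ u → u ≤ θ → Real.exp (-u^2) * f (Real.exp (-u^2)) = 1) ∧
    (∀ u, η ≤ u → Real.exp (-u^2) * f (Real.exp (-u^2)) = 0) := by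
  set y1 := Real.exp (-η^2)
  set y2 := Real.exp (-θ^2)
  have hy : y1 < y2 := Real.exp_lt_exp.2 (by nlinarith)
  have hy1 : 0 < y1 := Real.exp_pos _
  let r : ℝ → ℝ := fun y => max 0 (min 1 ((y - y1)/(y2 - y1)))
  have hr : Continuous r := by fun_prop
  have hd : 0 < y2 - y1 := by linarith
  have key : ∀ y, 0 < y → y * (r y / max y y1) = r y := by
    intro y hy0
    rcases le_total y y1 with h | h
    · have : r y = 0 := by
        refine max_eq_left ((min_le_right _ _).trans ?_)
        exact div_nonpos_of_nonpos_of_nonneg (by linarith) hd.le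
      rw [this]; simp
    · rw [max_eq_left h]; field_simp
  refine ⟨fun y => r y / max y y1, ?_, ?_, ?_, ?_, ?_⟩
  · exact hr.div (by fun_prop) fun y => (lt_max_of_lt_right hy1).ne'
  · intro u; simp only; rw [key _ (Real.exp_pos _)]; exact le_max_left _ _
  · intro u; simp only; rw [key _ (Real.exp_pos _)]; exact max_le zero_le_one (min_le_left _ _)
  · intro u hu0 hu; simp only; rw [key _ (Real.exp_pos _)]
    have : y2 ≤ Real.exp (-u^2) := Real.exp_le_exp.2 (by nlinarith)
    have h1 : 1 ≤ (Real.exp (-u^2) - y1)/(y2 - y1) := by rw [le_div_iff₀ hd]; linarith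
    simp only [r]
    rw [min_eq_left h1]; simp
  · intro u hu; simp only; rw [key _ (Real.exp_pos _)]
    have : Real.exp (-u^2) ≤ y1 := Real.exp_le_exp.2 (by nlinarith)
    refine max_eq_left ((min_le_right _ _).trans ?_)
    exact div_nonpos_of_nonpos_of_nonneg (by linarith) hd.le

lemma karamata (μ : Measure ℝ) [IsFiniteMeasure μ] (h0 : μ (Iic 0) = 0) (C : ℝ) (hC : 0 ≤ C)
    (hP : Tendsto (fun T : ℝ => T * ∫ b, Real.exp (-(b*T)^2) ∂μ) atTop (𝓝 (C * (√Real.pi / 2)))) :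
    Tendsto (fun T : ℝ => T * μ.real (Iic (1/T))) atTop (𝓝 C) := by
  have hae : ∀ᵐ b ∂μ, b ∉ Iic (0:ℝ) := measure_eq_zero_iff_ae_notMem.1 h0
  have hind : ∀ T, μ.real (Iic (1/T)) = ∫ b, (Iic (1/T)).indicator (fun _ => (1:ℝ)) b ∂μ := fun T => by
    rw [integral_indicator measurableSet_Iic]; simp [measureReal_restrict_apply]
  have hintind : ∀ T : ℝ, Integrable ((Iic (1/T)).indicator (fun _ => (1:ℝ))) μ := fun T =>
    (integrable_const (1:ℝ)).indicator measurableSet_Iic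
  have hintindL : ∀ c : ℝ, IntegrableOn ((Iic c).indicator (fun _ => (1:ℝ))) (Ioi 0) := fun c => by
    rw [integrableOn_indicator_iff measurableSet_Iic, inter_comm, Ioi_inter_Iic]; simp
  have hIval : ∀ c : ℝ, 0 ≤ c → ∫ u in Ioi (0:ℝ), (Iic c).indicator (fun _ => (1:ℝ)) u = c := fun c hc => by
    rw [setIntegral_indicator measurableSet_Iic, Ioi_inter_Iic]; simp [hc]
  rw [tendsto_order]
  constructor
  · intro a ha
    -- choose θ < 1 with a < C θ
    obtain ⟨θ, hθ0, hθ1, hθ⟩ : ∃ θ : ℝ, 0 < θ ∧ θ < 1 ∧ a < C * θ := by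
      have : Tendsto (fun θ : ℝ => C * θ) (𝓝[<] 1) (𝓝 (C * 1)) := (tendsto_id.const_mul C).mono_left nhdsWithin_le_nhds
      have h1 := this.eventually (eventually_gt_nhds (by simpa using ha))
      have h2 : ∀ᶠ θ : ℝ in 𝓝[<] 1, θ ∈ Ioo (0:ℝ) 1 := Ioo_mem_nhdsLT one_pos
      obtain ⟨θ, h3, h4⟩ := (h1.and h2).exists
      exact ⟨θ, h4.1, h4.2, h3⟩
    obtain ⟨f, hf, f0, f1, fθ, fη⟩ := ramp_exists θ 1 hθ0 hθ1
    have hlim := karamata_cont μ C hC hP f hf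
    have hge : C * θ ≤ C * ∫ u in Ioi (0:ℝ), Real.exp (-u^2) * f (Real.exp (-u^2)) := by
      gcongr
      rw [← hIval θ hθ0.le]
      refine setIntegral_mono_on (hintindL θ) (int_cont_leb f hf) measurableSet_Ioi fun u hu => ?_
      by_cases huθ : u ∈ Iic θ
      · rw [indicator_of_mem huθ]; exact (fθ u (le_of_lt hu) huθ).ge
      · rw [indicator_of_notMem huθ]; exact f0 u
    filter_upwards [hlim.eventually (eventually_gt_nhds (hθ.trans_le hge)), eventually_gt_atTop 0] with T h1 hT
    refine h1.trans_le ?_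
    gcongr
    rw [hind]
    refine integral_mono_ae (int_cont_bdd μ f hf T) (hintind T) ?_
    filter_upwards [hae] with b hb
    by_cases hbT : b ∈ Iic (1/T)
    · rw [indicator_of_mem hbT]; exact f1 _
    · rw [indicator_of_notMem hbT]
      refine (fη _ ?_).le
      have : 1/T < b := by simpa using hbT
      rw [div_lt_iff₀ hT] at this; exact this.le
  · intro a ha
    obtain ⟨η, hη1, hη⟩ : ∃ η : ℝ, 1 < η ∧ C * η < a := by
      have : Tendsto (fun θ : ℝ => C * θ) (𝓝[>] 1) (𝓝 (C * 1)) := (tendsto_id.const_mul C).mono_left nhdsWithin_le_nhds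
      have h1 := this.eventually (eventually_lt_nhds (by simpa using ha))
      obtain ⟨θ, h3, h4⟩ := (h1.and self_mem_nhdsWithin).exists
      exact ⟨θ, h4, h3⟩
    obtain ⟨f, hf, f0, f1, fθ, fη⟩ := ramp_exists 1 η one_pos hη1
    have hlim := karamata_cont μ C hC hP f hf
    have hge : C * ∫ u in Ioi (0:ℝ), Real.exp (-u^2) * f (Real.exp (-u^2)) ≤ C * η := by
      gcongr
      rw [← hIval η (by linarith)]
      refine setIntegral_mono_on (int_cont_leb f hf) (hintindL η) measurableSet_Ioi fun u hu => ?_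
      by_cases huθ : u ∈ Iic η
      · rw [indicator_of_mem huθ]; exact f1 u
      · rw [indicator_of_notMem huθ]; exact (fη u (le_of_lt (by simpa using huθ))).le
    filter_upwards [hlim.eventually (eventually_lt_nhds (hge.trans_lt hη)), eventually_gt_atTop 0] with T h1 hT
    refine lt_of_le_of_lt ?_ h1
    gcongr
    rw [hind]
    refine integral_mono_ae (hintind T) (int_cont_bdd μ f hf T) ?_
    filter_upwards [hae] with b hb
    by_cases hbT : b ∈ Iic (1/T)
    · rw [indicator_of_mem hbT]
      refine (fθ _ ?_ ?_).ge
      · have : 0 < b := by simpa using hb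
        positivity
      · exact (le_div_iff₀ hT).1 hbT
    · rw [indicator_of_notMem hbT]; exact f0 _

lemma tauberian (μ : Measure ℝ) [IsFiniteMeasure μ] (h0 : μ (Iic 0) = 0) (K : ℝ)
    (hW : Tendsto (Wf μ) atTop (𝓝 K)) :
    Tendsto (fun x : ℝ => μ.real (Iic x) / x) (𝓝[>] 0) (𝓝 (K / Real.pi)) := by
  have hK : 0 ≤ K := ge_of_tendsto' hW (Wf_nonneg μ)
  have h1 := gauss_limit μ h0 K hW
  have hpi : √Real.pi ^ 2 = Real.pi := Real.sq_sqrt Real.pi_pos.le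
  have hpi0 : 0 < √Real.pi := Real.sqrt_pos.2 Real.pi_pos
  have h2 := karamata μ h0 (K / Real.pi) (by positivity) (by
    convert h1 using 2
    rw [div_mul_div_comm, div_eq_div_iff (by positivity) (by positivity)]
    linear_combination 2 * K * hpi)
  refine (h2.comp tendsto_inv_nhdsGT_zero).congr fun x => ?_
  simp [div_eq_inv_mul]

lemma approx_conv (f : ℝ → ℝ) (h : ∀ ε > 0, ∃ g : ℝ → ℝ, ∃ l, Tendsto g atTop (𝓝 l) ∧ ∀ᶠ T in atTop, |f T - g T| ≤ ε) :
    ∃ K, Tendsto f atTop (𝓝 K) := by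
  have : Cauchy (map f atTop) := by
    rw [Metric.cauchy_iff]
    refine ⟨inferInstance, fun ε hε => ?_⟩
    obtain ⟨g, l, hg, hfg⟩ := h (ε/5) (by positivity)
    have h2 := Metric.tendsto_nhds.1 hg (ε/5) (by positivity)
    refine ⟨{y | |y - l| ≤ 2*ε/5}, ?_, ?_⟩
    · rw [mem_map]
      filter_upwards [hfg, h2] with T h1 h2
      rw [Real.dist_eq] at h2
      show |f T - l| ≤ _
      rw [abs_lt] at h2
      rw [abs_le] at h1 ⊢
      constructor <;> linarith [h1.1, h1.2, h2.1, h2.2]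
    · intro x hx y hy
      simp only [mem_ofPred_eq, abs_le] at hx hy
      rw [Real.dist_eq, abs_lt]
      constructor <;> linarith [hx.1, hx.2, hy.1, hy.2]
  exact cauchy_iff_exists_le_nhds.1 this

lemma sinc_sq_le (x : ℝ) (hx : x ≠ 0) : Real.sinc (x/2)^2 ≤ 4 / x^2 := by
  have := sinc_sq_mul x
  rw [le_div_iff₀ (by positivity)]
  nlinarith [Real.neg_one_le_cos x]

lemma tail_bound (μ : Measure ℝ) [IsFiniteMeasure μ] (M : ℝ) (hM0 : 0 ≤ M)
    (hM : ∀ x > 0, μ.real (Iic x) ≤ M * x) (R T : ℝ) (hR : 0 < R) (hT : 0 < T) :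
    T * ∫ b in Ioi (R/T), Real.sinc (b * T / 2)^2 ∂μ ≤ 16 * M / R := by
  have key : ∫⁻ b in Ioi (R/T), ENNReal.ofReal (Real.sinc (b * T / 2)^2) ∂μ ≤ ENNReal.ofReal (16 * M / (R * T)) := by
    calc ∫⁻ b in Ioi (R/T), ENNReal.ofReal (Real.sinc (b * T / 2)^2) ∂μ 
        = ∫⁻ b, (Ioi (R/T)).indicator (fun b => ENNReal.ofReal (Real.sinc (b * T / 2)^2)) b ∂μ := by
          rw [lintegral_indicator measurableSet_Ioi]
      _ ≤ ∫⁻ b, ∑' n : ℕ, (Iic (2^(n+1) * (R/T))).indicator (fun _ => ENNReal.ofReal (4 / (4^n * R^2))) b ∂μ := by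
          refine lintegral_mono fun b => ?_
          by_cases hb : b ∈ Ioi (R/T)
          · rw [indicator_of_mem hb]
            have hb : R/T < b := hb
            have hbT : R < b * T := by rwa [div_lt_iff₀ hT] at hb
            obtain ⟨n, hn1, hn2⟩ := exists_nat_pow_near (x := b * T / R) (y := 2) (by rw [le_div_iff₀ hR]; linarith) (by norm_num)
            rw [le_div_iff₀ hR] at hn1
            rw [div_lt_iff₀ hR] at hn2
            refine le_trans ?_ (ENNReal.le_tsum n)
            rw [indicator_of_mem]
            · refine ENNReal.ofReal_le_ofReal ((sinc_sq_le _ (by linarith)).trans ?_)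
              gcongr
              calc (4:ℝ)^n * R^2 = (2^n * R)^2 := by rw [mul_pow, ← pow_mul, mul_comm n, pow_mul]; norm_num
                _ ≤ _ := by gcongr
            · show b ≤ _
              rw [← mul_div_assoc, le_div_iff₀ hT]; exact hn2.le
          · rw [indicator_of_notMem hb]; exact zero_le
      _ = ∑' n : ℕ, ENNReal.ofReal (4 / (4^n * R^2)) * μ (Iic (2^(n+1) * (R/T))) := by
          rw [lintegral_tsum]
          · congr 1; ext n
            rw [lintegral_indicator measurableSet_Iic]; simp
          · intro n; exact (measurable_const.indicator measurableSet_Iic).aemeasurable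
      _ ≤ ∑' n : ℕ, ENNReal.ofReal (8 * M / (R * T) * (1/2)^n) := by
          refine ENNReal.tsum_le_tsum fun n => ?_
          rw [← ofReal_measureReal, ← ENNReal.ofReal_mul (by positivity)]
          refine ENNReal.ofReal_le_ofReal ?_
          calc _ ≤ 4 / (4^n * R^2) * (M * (2^(n+1) * (R/T))) := by
                gcongr; exact hM _ (by positivity)
            _ = _ := by
                have : (4:ℝ)^n = 2^n * 2^n := by rw [← mul_pow]; norm_num
                rw [this, pow_succ, div_pow, one_pow]; field_simp; ring
      _ = ENNReal.ofReal (16 * M / (R * T)) := by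
          rw [← ENNReal.ofReal_tsum_of_nonneg (fun n => by positivity) (summable_geometric_two.mul_left _)]
          rw [tsum_mul_left, tsum_geometric_two]; congr 1; ring
  rw [integral_eq_lintegral_of_nonneg_ae (Eventually.of_forall fun _ => sq_nonneg _) (int_sinc μ T).aestronglyMeasurable.restrict]
  have := ENNReal.toReal_mono ENNReal.ofReal_ne_top key
  rw [ENNReal.toReal_ofReal (by positivity)] at this
  calc _ ≤ T * (16 * M / (R * T)) := by gcongr
    _ = _ := by field_simp

lemma step_approx (μ : Measure ℝ) [IsFiniteMeasure μ] (F : ℝ → ℝ) (hF : Continuous F) (R ε : ℝ) (hR : 0 < R) (hε : 0 < ε) :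
    ∃ N : ℕ, ∃ c x : ℕ → ℝ, (∀ i, 0 ≤ x i) ∧ ∀ T : ℝ, 0 < T →
      |∫ b in Ioc 0 (R/T), F (b * T) ∂μ - ∑ i ∈ Finset.range N, c i * (μ.real (Iic (x (i+1) / T)) - μ.real (Iic (x i / T)))|
        ≤ ε * μ.real (Iic (R/T)) := by
  have huc := isCompact_Icc.uniformContinuousOn_of_continuous (s := Icc (0:ℝ) R) hF.continuousOn
  rw [Metric.uniformContinuousOn_iff] at huc
  obtain ⟨δ, hδ, hd⟩ := huc ε hε
  obtain ⟨N, hN⟩ := exists_nat_gt (R/δ)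
  have hN0 : (0:ℝ) < N := lt_trans (by positivity) hN
  refine ⟨N, fun i => F ((i+1:ℕ) * (R/N)), fun i => i * (R/N), fun i => by positivity, fun T hT => ?_⟩
  have hmono : ∀ i : ℕ, (i:ℝ) * (R/N) / T ≤ (i+1:ℕ) * (R/N) / T := fun i => by
    push_cast; gcongr; linarith
  have hint : ∀ s, IntegrableOn (fun b => F (b * T)) (Ioc 0 (R/T) ∩ s) μ := by
    intro s
    have : IntegrableOn (fun b => F (b * T)) (Icc 0 (R/T)) μ :=
      (hF.comp (by fun_prop : Continuous fun b : ℝ => b * T)).continuousOn.integrableOn_compact isCompact_Icc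
    exact this.mono_set (inter_subset_left.trans Ioc_subset_Icc_self)
  have hIoc : ∀ a b : ℝ, a ≤ b → μ.real (Ioc a b) = μ.real (Iic b) - μ.real (Iic a) := fun a b hab => by
    rw [← Iic_sdiff_Iic, measureReal_sdiff (Iic_subset_Iic.2 hab) measurableSet_Iic]
  have hsplit : ∫ b in Ioc 0 (R/T), F (b * T) ∂μ = ∑ i ∈ Finset.range N, ∫ b in Ioc (i * (R/N) / T) ((i+1:ℕ) * (R/N) / T), F (b*T) ∂μ := by
    have := intervalIntegral.sum_integral_adjacent_intervals (μ := μ) (f := fun b => F (b*T)) (a := fun i : ℕ => (i:ℝ) * (R/N) / T) (n := N) ?_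
    · rw [intervalIntegral.integral_of_le (by simp only [Nat.cast_zero, zero_mul, zero_div]; positivity)] at this
      have e : (N:ℝ) * (R/N) / T = R/T := by field_simp
      simp only [Nat.cast_zero, zero_mul, zero_div, e] at this
      rw [← this]
      refine Finset.sum_congr rfl fun i _ => ?_
      rw [intervalIntegral.integral_of_le (hmono i)]
    · intro k _
      exact (hF.comp (by fun_prop : Continuous fun b : ℝ => b * T)).intervalIntegrable _ _
  rw [hsplit, ← Finset.sum_sub_distrib]
  refine (Finset.abs_sum_le_sum_abs _ _).trans ?_
  calc _ ≤ ∑ i ∈ Finset.range N, ε * (μ.real (Iic ((i+1:ℕ) * (R/N) / T)) - μ.real (Iic (i * (R/N) / T))) := by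
        refine Finset.sum_le_sum fun i hi => ?_
        rw [← hIoc _ _ (hmono i)]
        have hiN : i + 1 ≤ N := Finset.mem_range.1 hi
        have hI : IntegrableOn (fun b => F (b*T)) (Ioc (i * (R/N) / T) ((i+1:ℕ) * (R/N) / T)) μ :=
          ((hF.comp (by fun_prop : Continuous fun b : ℝ => b * T)).continuousOn.integrableOn_compact isCompact_Icc).mono_set Ioc_subset_Icc_self
        have e : F ((i+1:ℕ) * (R/N)) * μ.real (Ioc (i * (R/N) / T) ((i+1:ℕ) * (R/N) / T)) = ∫ b in Ioc (i * (R/N) / T) ((i+1:ℕ) * (R/N) / T), F ((i+1:ℕ) * (R/N)) ∂μ := by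
          simp [mul_comm]
        rw [e, ← integral_sub hI (integrable_const _), ← Real.norm_eq_abs]
        refine norm_setIntegral_le_of_norm_le_const (measure_lt_top _ _) fun b hb => ?_
        have hup : ((i+1:ℕ):ℝ) * (R/N) ≤ R := by
          have : ((i+1:ℕ):ℝ) ≤ N := by exact_mod_cast hiN
          calc _ ≤ (N:ℝ) * (R/N) := by gcongr
            _ = R := by field_simp
        have hb1 : (i:ℝ) * (R/N) < b * T := (div_lt_iff₀ hT).1 hb.1
        have hb2 : b * T ≤ (i+1:ℕ) * (R/N) := (le_div_iff₀ hT).1 hb.2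
        have hb0 : 0 ≤ (i:ℝ) * (R/N) := by positivity
        have hRN : R/N < δ := by
          rw [div_lt_iff₀ hN0]; rw [div_lt_iff₀ hδ] at hN; linarith
        refine (hd _ ⟨by linarith, by linarith⟩ _ ⟨by positivity, hup⟩ ?_).le
        rw [Real.dist_eq, abs_lt]
        push_cast at hb2 ⊢
        constructor <;> linarith
    _ = ε * (μ.real (Iic (R/T)) - μ.real (Iic 0)) := by
        rw [← Finset.mul_sum, Finset.sum_range_sub (fun i : ℕ => μ.real (Iic (i * (R/N) / T)))]
        have e : (N:ℝ) * (R/N) / T = R/T := by field_simp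
        simp [e]
    _ ≤ _ := by
        gcongr; linarith [measureReal_nonneg (μ := μ) (s := Iic (0:ℝ))]

lemma abelian_s15 (μ : Measure ℝ) [IsFiniteMeasure μ] (h0 : μ (Iic 0) = 0) (C : ℝ)
    (hC : Tendsto (fun x : ℝ => μ.real (Iic x) / x) (𝓝[>] 0) (𝓝 C)) :
    ∃ K, Tendsto (Wf μ) atTop (𝓝 K) := by
  obtain ⟨M, hM0, hM⟩ : ∃ M : ℝ, 0 ≤ M ∧ ∀ x > 0, μ.real (Iic x) ≤ M * x := by
    have h1 := hC.eventually (eventually_le_nhds (show C < C + 1 by linarith))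
    obtain ⟨x0, hx0, h2⟩ := mem_nhdsGT_iff_exists_Ioo_subset.1 h1
    have hx0 : 0 < x0 := hx0
    refine ⟨max (C+1) (μ.real univ / x0), le_max_of_le_right (by positivity), fun x hx => ?_⟩
    rcases lt_or_ge x x0 with h | h
    · have h3 : μ.real (Iic x) / x ≤ C + 1 := h2 ⟨hx, h⟩
      rw [div_le_iff₀ hx] at h3
      exact h3.trans (by gcongr; exact le_max_left _ _)
    · calc μ.real (Iic x) ≤ μ.real univ := measureReal_mono (subset_univ _)
        _ = μ.real univ / x0 * x0 := by field_simp
        _ ≤ _ := by gcongr; exact le_max_right _ _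
  have hlim : ∀ c : ℝ, 0 ≤ c → Tendsto (fun T : ℝ => T * μ.real (Iic (c / T))) atTop (𝓝 (C * c)) := by
    intro c hc
    rcases hc.eq_or_lt with rfl | hc
    · simp [measureReal_def, h0]
    · have h1 : Tendsto (fun T : ℝ => c / T) atTop (𝓝[>] 0) := by
        refine tendsto_nhdsWithin_iff.2 ⟨tendsto_const_nhds.div_atTop tendsto_id, ?_⟩
        filter_upwards [eventually_gt_atTop 0] with T hT
        exact div_pos hc hT
      refine ((hC.comp h1).mul_const c).congr' ?_
      filter_upwards [eventually_gt_atTop 0] with T hT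
      simp only [Function.comp]; field_simp
  apply approx_conv
  intro ε hε
  set R := 32 * (M + 1) / ε with hR
  have hR0 : 0 < R := by positivity
  obtain ⟨N, c, x, hx, happ⟩ := step_approx μ (fun u => Real.sinc (u/2)^2)
    ((Real.continuous_sinc.comp (by fun_prop : Continuous fun u : ℝ => u/2)).pow 2) R (ε / (2 * (M + 1) * R)) hR0 (by positivity)
  refine ⟨fun T => ∑ i ∈ Finset.range N, c i * (T * μ.real (Iic (x (i+1) / T)) - T * μ.real (Iic (x i / T))), _,
    tendsto_finsetSum _ fun i _ => ((hlim _ (hx _)).sub (hlim _ (hx _))).const_mul _, ?_⟩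
  filter_upwards [eventually_gt_atTop 0] with T hT
  have h1 := happ T hT
  have h2 := tail_bound μ M hM0 hM R T hR0 hT
  have h3 : Wf μ T = T * (∫ b in Ioc 0 (R/T), Real.sinc (b*T/2)^2 ∂μ + ∫ b in Ioi (R/T), Real.sinc (b*T/2)^2 ∂μ) := by
    rw [Wf, abs_of_pos hT, ← setIntegral_union _ measurableSet_Ioi (int_sinc μ T).integrableOn (int_sinc μ T).integrableOn]
    · rw [Ioc_union_Ioi_eq_Ioi (by positivity), Measure.restrict_eq_self_of_ae_mem]
      filter_upwards [measure_eq_zero_iff_ae_notMem.1 h0] with b hb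
      simpa using hb
    · exact Set.disjoint_left.2 fun b hb hb' => not_lt.2 hb.2 hb'
  have h4 : 0 ≤ T * ∫ b in Ioi (R/T), Real.sinc (b*T/2)^2 ∂μ := mul_nonneg hT.le (integral_nonneg fun _ => sq_nonneg _)
  set S := ∑ i ∈ Finset.range N, c i * (μ.real (Iic (x (i+1) / T)) - μ.real (Iic (x i / T))) with hS
  have h5 : ∑ i ∈ Finset.range N, c i * (T * μ.real (Iic (x (i+1) / T)) - T * μ.real (Iic (x i / T))) = T * S := by
    rw [hS, Finset.mul_sum]; exact Finset.sum_congr rfl fun i _ => by ring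
  rw [h5, h3]
  have h6 : 16 * M / R ≤ ε/2 := by
    rw [div_le_iff₀ hR0, hR]; field_simp; linarith
  have h7 : T * (ε / (2 * (M + 1) * R) * μ.real (Iic (R/T))) ≤ ε/2 := by
    calc _ ≤ T * (ε / (2 * (M + 1) * R) * (M * (R/T))) := by
          gcongr; exact hM _ (by positivity)
      _ = ε/2 * (M / (M+1)) := by field_simp
      _ ≤ ε/2 * 1 := by
          gcongr; rw [div_le_one (by positivity)]; linarith
      _ = _ := by ring
  have h8 : |T * (∫ b in Ioc 0 (R/T), Real.sinc (b*T/2)^2 ∂μ - S)| ≤ ε/2 := by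
    rw [abs_mul, abs_of_pos hT]
    exact (mul_le_mul_of_nonneg_left h1 hT.le).trans h7
  rw [abs_le] at h8 ⊢
  rw [mul_sub] at h8
  rw [mul_add]
  constructor <;> linarith [h8.1, h8.2]

/-- the kernel of the continuous-time variance -/
noncomputable def Gk (w : ℂ) : ℂ := (Complex.exp w - w - 1) / w^2

lemma norm_exp_le_one_of (w : ℂ) (hw : w.re ≤ 0) : ‖Complex.exp w‖ ≤ 1 := by
  rw [Complex.norm_exp]; exact Real.exp_le_one_iff.2 hw

lemma norm_exp_sub_one_le_two (w : ℂ) (hw : w.re ≤ 0) : ‖Complex.exp w - 1‖ ≤ 2 := by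
  refine (norm_sub_le _ _).trans ?_
  have := norm_exp_le_one_of w hw
  simp; linarith

lemma Gk_small (w : ℂ) (h : ‖w‖ ≤ 1) : ‖Gk w‖ ≤ 1 := by
  have h1 := Complex.norm_exp_sub_one_sub_id_le h
  rw [Gk, norm_div, norm_pow, show Complex.exp w - w - 1 = Complex.exp w - 1 - w by ring]
  exact div_le_one_of_le₀ h1 (by positivity)

lemma Gk_large (w : ℂ) (hw : w.re ≤ 0) (h : 1 ≤ ‖w‖) : ‖Gk w‖ ≤ 3 / ‖w‖ := by
  have h0 : 0 < ‖w‖ := by linarith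
  rw [Gk, norm_div, norm_pow, show Complex.exp w - w - 1 = Complex.exp w - 1 - w by ring, div_le_div_iff₀ (by positivity) h0]
  have h1 := norm_sub_le (Complex.exp w - 1) w
  have h2 := norm_exp_sub_one_le_two w hw
  nlinarith

lemma Gk_le (w : ℂ) (hw : w.re ≤ 0) : ‖Gk w‖ ≤ 3 / ‖w‖ := by
  rcases le_total ‖w‖ 1 with h | h
  · by_cases h0 : w = 0
    · simp [h0, Gk]
    · have : 0 < ‖w‖ := norm_pos_iff.2 h0
      refine (Gk_small w h).trans ?_
      rw [le_div_iff₀ this]; linarith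
  · exact Gk_large w hw h

lemma Gk_le_three (w : ℂ) (hw : w.re ≤ 0) : ‖Gk w‖ ≤ 3 := by
  rcases le_total ‖w‖ 1 with h | h
  · linarith [Gk_small w h]
  · refine (Gk_large w hw h).trans ?_
    rw [div_le_iff₀ (by linarith)]; linarith

lemma Gk_deriv (w : ℂ) (h : w ≠ 0) : HasDerivAt Gk ((Complex.exp w - 1) / w^2 - 2 * Gk w / w) w := by
  have h1 : HasDerivAt (fun w => Complex.exp w - w - 1) (Complex.exp w - 1) w :=
    ((Complex.hasDerivAt_exp w).sub (hasDerivAt_id w)).sub_const 1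
  have h2 := h1.div (hasDerivAt_pow 2 w) (pow_ne_zero 2 h)
  refine h2.congr_deriv ?_
  unfold Gk; field_simp; norm_num; ring

lemma Gk_diff (w : ℂ) (hw : w.re ≤ 0) (hb : w.im ≠ 0) :
    ‖Gk w - Gk (w.im * Complex.I)‖ ≤ 8 * |w.re| / w.im^2 := by
  have hconv : Convex ℝ {z : ℂ | z.re ≤ 0 ∧ z.im = w.im} := by
    have h1 : Convex ℝ {z : ℂ | z.re ≤ 0} := convex_halfSpace_re_le 0
    have h2 : Convex ℝ {z : ℂ | z.im = w.im} := (convex_singleton w.im).linear_preimage Complex.imLm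
    exact h1.inter h2
  have hne : ∀ z : ℂ, z.im = w.im → z ≠ 0 := by
    rintro z hz rfl; exact hb (by simpa using hz.symm)
  have := hconv.norm_image_sub_le_of_norm_hasDerivWithin_le (𝕜 := ℂ) (f := Gk) (C := 8 / w.im^2)
    (f' := fun w => (Complex.exp w - 1) / w^2 - 2 * Gk w / w)
    (x := w.im * Complex.I) (y := w) ?_ ?_ ?_ ?_
  · refine this.trans (le_of_eq ?_)
    have : w - w.im * Complex.I = (w.re : ℂ) := by
      apply Complex.ext <;> simp
    rw [this, Complex.norm_real, Real.norm_eq_abs]; ring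
  · intro z hz; exact (Gk_deriv z (hne z hz.2)).hasDerivWithinAt
  · intro z hz
    have hz0 : 0 < ‖z‖ := norm_pos_iff.2 (hne z hz.2)
    have h1 : ‖(Complex.exp z - 1) / z^2‖ ≤ 2 / ‖z‖^2 := by
      rw [norm_div, norm_pow]; gcongr; exact norm_exp_sub_one_le_two z hz.1
    have h2 : ‖2 * Gk z / z‖ ≤ 6 / ‖z‖^2 := by
      rw [norm_div, norm_mul]
      have := Gk_le z hz.1
      calc _ ≤ 2 * (3 / ‖z‖) / ‖z‖ := by gcongr; simp
        _ = _ := by field_simp; norm_num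
    refine (norm_sub_le _ _).trans ((add_le_add h1 h2).trans ?_)
    rw [← add_div]
    have h3 : w.im^2 ≤ ‖z‖^2 := by
      rw [← hz.2, ← sq_abs z.im]; gcongr; exact Complex.abs_im_le_norm z
    have : 0 < w.im^2 := by positivity
    norm_num
    gcongr
  · simp
  · exact ⟨hw, rfl⟩

lemma Gk_imag (β : ℝ) (hβ : β ≠ 0) : (Gk (β * Complex.I)).re = Real.sinc (β/2)^2 / 2 := by
  have h1 : Gk (β * Complex.I) = (Complex.exp (β * Complex.I) - β * Complex.I - 1) / ((-β^2 : ℝ):ℂ) := by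
    unfold Gk; congr 1; rw [mul_pow, Complex.I_sq]; push_cast; ring
  rw [h1, Complex.div_ofReal_re]
  simp only [Complex.sub_re, Complex.exp_ofReal_mul_I_re, Complex.one_re]
  have := sinc_sq_mul β
  have h2 : Real.sinc (β/2)^2 = 2 * (1 - Real.cos β) / β^2 := by rw [← this]; field_simp
  rw [h2]; simp; field_simp; ring

lemma Gk_nonneg (w : ℂ) (hw : w.re ≤ 0) : 0 ≤ (Gk w).re := by
  by_cases hw0 : w = 0
  · simp [hw0, Gk]
  set H : ℂ → ℂ := dslope (dslope Complex.exp 0) 0 with hH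
  have hHd : Differentiable ℂ H := by
    rw [← differentiableOn_univ, hH, Complex.differentiableOn_dslope univ_mem, Complex.differentiableOn_dslope univ_mem]
    exact Complex.differentiable_exp.differentiableOn
  have hHG : ∀ z, z ≠ 0 → H z = Gk z := by
    intro z hz
    rw [hH, dslope_of_ne _ hz, slope_def_field, dslope_same, dslope_of_ne _ hz, slope_def_field]
    simp [Gk]; field_simp; ring
  have hIm : ∀ x : ℝ, 0 ≤ (H (x * Complex.I)).re := by
    have hne : ∀ x : ℝ, x ≠ 0 → 0 ≤ (H (x * Complex.I)).re := by
      intro x hx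
      rw [hHG _ (by simp [hx]), Gk_imag x hx]; positivity
    intro x
    have hc : Continuous (fun x : ℝ => (H (x * Complex.I)).re) :=
      Complex.continuous_re.comp (hHd.continuous.comp (by fun_prop))
    have : Tendsto (fun x : ℝ => (H (x * Complex.I)).re) (𝓝[≠] x) (𝓝 ((H (x * Complex.I)).re)) :=
      (hc.tendsto x).mono_left nhdsWithin_le_nhds
    by_cases hx : x = 0
    · refine ge_of_tendsto this ?_
      filter_upwards [self_mem_nhdsWithin] with y hy
      exact hne y (by rw [hx] at hy; exact hy)
    · exact hne x hx
  have hbd : ∀ z : ℂ, 0 < z.re → ‖Complex.exp (-H (-z))‖ ≤ Real.exp 3 := by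
    intro z hz
    have hz0 : -z ≠ 0 := by
      intro h; rw [neg_eq_zero] at h; simp [h] at hz
    rw [Complex.norm_exp, hHG _ hz0]
    refine Real.exp_le_exp.2 ?_
    refine (Complex.re_le_norm _).trans ?_
    rw [norm_neg]; exact Gk_le_three _ (by simp; exact hz.le)
  have := PhragmenLindelof.right_half_plane_of_bounded_on_real (f := fun z => Complex.exp (-H (-z))) (C := 1) (z := -w) ?_ ?_ ?_ ?_ ?_
  · rw [neg_neg, Complex.norm_exp, hHG _ hw0, Real.exp_le_one_iff] at this
    simpa using this
  · exact Differentiable.diffContOnCl (by fun_prop)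
  · refine ⟨1, by norm_num, 0, ?_⟩
    refine Asymptotics.IsBigO.of_bound (Real.exp 3) ?_
    refine mem_inf_of_right ?_
    intro z hz
    have := hbd z hz
    simpa using this
  · refine ⟨Real.exp 3, ?_⟩
    rw [eventually_map]
    filter_upwards [eventually_gt_atTop 0] with x hx
    exact hbd _ (by simpa using hx)
  · intro x
    rw [Complex.norm_exp, Real.exp_le_one_iff]
    have := hIm (-x)
    simpa using this
  · simpa using hw

/-- the cone -/
def Qc : Set ℂ := {z : ℂ | 0 ≤ -z.re ∧ -z.re ≤ |z.im|}

lemma Qc_meas : MeasurableSet Qc := by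
  have : Qc = {z : ℂ | 0 ≤ -z.re} ∩ {z : ℂ | -z.re ≤ |z.im|} := by
    ext z
    simp [Qc]
  rw [this]
  exact (measurableSet_le (by fun_prop) (by fun_prop)).inter
    (measurableSet_le (by fun_prop) (by fun_prop))

/-- pushforward of the cone part -/
noncomputable def muC (ν : Measure ℂ) : Measure ℝ := (ν.restrict Qc).map (fun z => |z.im|)

lemma meas_absim : Measurable (fun z : ℂ => |z.im|) := by fun_prop

instance muC_fin (ν : Measure ℂ) [IsFiniteMeasure ν] : IsFiniteMeasure (muC ν) := by
  unfold muC; infer_instance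

lemma muC_Iic (ν : Measure ℂ) (x : ℝ) : muC ν (Iic x) = ν (UsetCt x) := by
  unfold muC
  rw [Measure.map_apply meas_absim measurableSet_Iic, Measure.restrict_apply (meas_absim measurableSet_Iic)]
  congr 1
  ext z
  simp only [UsetCt, Qc, mem_inter_iff, mem_preimage, mem_Iic, mem_ofPred_eq]
  tauto

lemma muC_zero (ν : Measure ℂ) (h0 : ν {(0 : ℂ)} = 0) : muC ν (Iic 0) = 0 := by
  rw [muC_Iic]
  refine measure_mono_null (fun z hz => ?_) h0
  obtain ⟨h1, h2, h3⟩ := hz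
  have h4 : z.im = 0 := abs_nonpos_iff.1 h3
  rw [h4, abs_zero] at h2
  exact Complex.ext (by simp; linarith) (by simpa using h4)

lemma VarCt_div (ν : Measure ℂ) (T : ℝ) (hT : 0 < T) :
    VarCt ν T / T = ∫ z, 2 * T * (Gk (z * T)).re ∂ν := by
  have : ∀ z : ℂ, ((Complex.exp (z * (T : ℂ)) - z * (T : ℂ) - 1) / z ^ 2).re = T^2 * (Gk (z * T)).re := by
    intro z
    have hT' : (T:ℂ) ≠ 0 := by exact_mod_cast hT.ne'
    have : (Complex.exp (z * (T : ℂ)) - z * (T : ℂ) - 1) / z ^ 2 = ((T^2 : ℝ):ℂ) * Gk (z * T) := by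
      unfold Gk
      by_cases hz : z = 0
      · simp [hz]
      · push_cast; field_simp
    rw [this, Complex.re_ofReal_mul]
  unfold VarCt
  simp_rw [this, integral_const_mul]
  rw [div_eq_iff hT.ne']; ring

lemma sinc_abs' (b T : ℝ) : Real.sinc (|b| * T / 2) = Real.sinc (b * T / 2) := by
  rcases abs_choice b with h | h <;> rw [h]
  rw [← Real.sinc_neg]; congr 1; ring

lemma Wf_muC (ν : Measure ℂ) (T : ℝ) (hT : 0 < T) :
    Wf (muC ν) T = ∫ z, Qc.indicator (fun z => T * Real.sinc (z.im * T / 2)^2) z ∂ν := by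
  unfold Wf muC
  rw [integral_map meas_absim.aemeasurable, integral_indicator Qc_meas, integral_const_mul, abs_of_pos hT]
  · simp_rw [sinc_abs']
  · exact ((Real.continuous_sinc.comp (by fun_prop : Continuous fun u : ℝ => u * T/2)).pow 2).aestronglyMeasurable

lemma Gk_meas (T : ℝ) : Measurable (fun z : ℂ => 2 * T * (Gk (z * T)).re) := by
  unfold Gk
  fun_prop

lemma ind_meas_s15 (T : ℝ) : Measurable (fun z : ℂ => Qc.indicator (fun z => T * Real.sinc (z.im * T / 2)^2) z) := by
  refine Measurable.indicator ?_ Qc_meas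
  have : Continuous (fun z : ℂ => T * Real.sinc (z.im * T / 2)^2) :=
    continuous_const.mul ((Real.continuous_sinc.comp (by fun_prop : Continuous fun z : ℂ => z.im * T/2)).pow 2)
  exact this.measurable

lemma mulT_re (z : ℂ) (T : ℝ) (hT : 0 < T) (hz : z.re ≤ 0) : (z * T).re ≤ 0 := by
  simp; exact mul_nonpos_of_nonpos_of_nonneg hz hT.le

lemma Gk_int (ν : Measure ℂ) [IsFiniteMeasure ν] (hre : ∀ᵐ z ∂ν, z.re ≤ 0) (T : ℝ) (hT : 0 < T) :
    Integrable (fun z : ℂ => 2 * T * (Gk (z * T)).re) ν := by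
  refine (integrable_const (2 * T * 3)).mono' (Gk_meas T).aestronglyMeasurable ?_
  filter_upwards [hre] with z hz
  rw [norm_mul, Real.norm_of_nonneg (by positivity : 0 ≤ 2 * T)]
  gcongr
  exact (Complex.abs_re_le_norm _).trans (Gk_le_three _ (mulT_re z T hT hz))

lemma ind_int (ν : Measure ℂ) [IsFiniteMeasure ν] (T : ℝ) (hT : 0 < T) :
    Integrable (fun z : ℂ => Qc.indicator (fun z => T * Real.sinc (z.im * T / 2)^2) z) ν := by
  refine (integrable_const T).mono' (ind_meas_s15 T).aestronglyMeasurable (Eventually.of_forall fun z => ?_)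
  refine (norm_indicator_le_norm_self _ _).trans ?_
  rw [Real.norm_of_nonneg (by positivity)]
  exact mul_le_of_le_one_right hT.le (sinc_sq_le_one _)

lemma neg_inv_re (z : ℂ) : -(z⁻¹.re) = -z.re / ‖z‖^2 := by
  rw [Complex.inv_re, Complex.normSq_eq_norm_sq]; ring

lemma Gk_pointwise (z : ℂ) (hz : z.re ≤ 0) (h0 : z ≠ 0) :
    Tendsto (fun T : ℝ => 2 * T * (Gk (z * T)).re) atTop (𝓝 (2 * (-(z⁻¹.re)))) := by
  rw [tendsto_iff_norm_sub_tendsto_zero]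
  have hlim : Tendsto (fun T : ℝ => 4 / ‖z‖^2 / T) atTop (𝓝 0) := tendsto_const_nhds.div_atTop tendsto_id
  refine squeeze_zero' (Eventually.of_forall fun _ => norm_nonneg _) ?_ hlim
  filter_upwards [eventually_gt_atTop 0] with T hT
  have hT' : (T:ℂ) ≠ 0 := by exact_mod_cast hT.ne'
  have hz0 : 0 < ‖z‖ := norm_pos_iff.2 h0
  have e : 2 * T * (Gk (z * T)).re - 2 * (-(z⁻¹.re)) = (((2 * T : ℝ):ℂ) * Gk (z * T) + ((2:ℝ):ℂ) * z⁻¹).re := by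
    rw [Complex.add_re, Complex.re_ofReal_mul, Complex.re_ofReal_mul]; ring
  have e2 : ((2 * T : ℝ):ℂ) * Gk (z * T) + ((2:ℝ):ℂ) * z⁻¹ = 2 * (Complex.exp (z * T) - 1) / (z^2 * T) := by
    unfold Gk; push_cast; field_simp; ring
  rw [e, e2]
  refine (Complex.abs_re_le_norm _).trans ?_
  rw [norm_div, norm_mul, norm_mul, norm_pow, Complex.norm_real, Real.norm_of_nonneg hT.le, div_div]
  gcongr
  have := norm_exp_sub_one_le_two _ (mulT_re z T hT hz)
  simp; linarith

lemma im_ne_of_mem (z : ℂ) (h0 : z ≠ 0) (hz : z ∈ Qc) : z.im ≠ 0 := by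
  intro h
  obtain ⟨h1, h2⟩ := hz
  rw [h, abs_zero] at h2
  exact h0 (Complex.ext (by simp; linarith) (by simpa using h))

lemma ind_pointwise (z : ℂ) (h0 : z ≠ 0) :
    Tendsto (fun T : ℝ => Qc.indicator (fun z => T * Real.sinc (z.im * T / 2)^2) z) atTop (𝓝 0) := by
  by_cases hz : z ∈ Qc
  · simp only [indicator_of_mem hz]
    have him := im_ne_of_mem z h0 hz
    have hlim : Tendsto (fun T : ℝ => 4 / z.im^2 / T) atTop (𝓝 0) := tendsto_const_nhds.div_atTop tendsto_id
    refine squeeze_zero' ?_ ?_ hlim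
    · filter_upwards [eventually_gt_atTop 0] with T hT
      positivity
    · filter_upwards [eventually_gt_atTop 0] with T hT
      have := sinc_sq_le (z.im * T) (by positivity)
      calc _ ≤ T * (4 / (z.im * T)^2) := by gcongr
        _ = _ := by field_simp
  · simp only [indicator_of_notMem hz]; exact tendsto_const_nhds

lemma F_bound (z : ℂ) (hz : z.re ≤ 0) (h0 : z ≠ 0) (T : ℝ) (hT : 0 < T) :
    ‖2 * T * (Gk (z * T)).re - Qc.indicator (fun z => T * Real.sinc (z.im * T / 2)^2) z‖ ≤ 32 * (-(z⁻¹.re)) := by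
  have hz0 : 0 < ‖z‖ := norm_pos_iff.2 h0
  have hsq : ‖z‖^2 = z.re^2 + z.im^2 := by
    rw [← Complex.normSq_eq_norm_sq, Complex.normSq_apply]; ring
  rw [neg_inv_re]
  by_cases hzQ : z ∈ Qc
  · rw [indicator_of_mem hzQ]
    have him := im_ne_of_mem z h0 hzQ
    have h1 := Gk_diff (z * T) (mulT_re z T hT hz) (by simp; exact ⟨him, hT.ne'⟩)
    have him2 : (z * (T:ℂ)).im = z.im * T := by simp
    have hre2 : (z * (T:ℂ)).re = z.re * T := by simp
    rw [him2, hre2] at h1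
    have h2 := (Complex.abs_re_le_norm _).trans h1
    rw [Complex.sub_re, Gk_imag _ (by positivity)] at h2
    have e : 2 * T * (Gk (z * T)).re - T * Real.sinc (z.im * T / 2)^2 = 2 * T * ((Gk (z * T)).re - Real.sinc (z.im * T / 2)^2 / 2) := by ring
    rw [e, norm_mul, Real.norm_of_nonneg (by positivity : 0 ≤ 2 * T), Real.norm_eq_abs]
    have him3 : 0 < z.im^2 := by positivity
    have hle : ‖z‖^2 ≤ 2 * z.im^2 := by
      have := hzQ.2
      have h5 : z.re^2 ≤ z.im^2 := by
        rw [← sq_abs z.im, ← neg_sq]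
        exact pow_le_pow_left₀ hzQ.1 this 2
      linarith
    calc _ ≤ 2 * T * (8 * |z.re * T| / (z.im * T)^2) := by gcongr
      _ = 16 * (-z.re) / z.im^2 := by
          rw [abs_mul, abs_of_pos hT, abs_of_nonpos hz]; field_simp; ring
      _ = 32 * (-z.re) / (2 * z.im^2) := by field_simp; ring
      _ ≤ 32 * (-z.re) / ‖z‖^2 := by
          have : 0 ≤ 32 * -z.re := by linarith
          gcongr
      _ = _ := by ring
  · rw [indicator_of_notMem hzQ, sub_zero]
    have hlt : |z.im| < -z.re := by
      by_contra h
      exact hzQ ⟨by linarith, not_lt.1 h⟩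
    have hn : ‖z‖ ≤ 2 * (-z.re) := by
      have := Complex.norm_le_abs_re_add_abs_im z
      rw [abs_of_nonpos hz] at this; linarith
    have h1 := (Complex.abs_re_le_norm _).trans (Gk_le (z * T) (mulT_re z T hT hz))
    rw [norm_mul, Complex.norm_real, Real.norm_of_nonneg hT.le] at h1
    rw [norm_mul, Real.norm_of_nonneg (by positivity : 0 ≤ 2 * T), Real.norm_eq_abs]
    calc _ ≤ 2 * T * (3 / (‖z‖ * T)) := by gcongr
      _ = 6 * ‖z‖ / ‖z‖^2 := by field_simp; norm_num
      _ ≤ 32 * -z.re / ‖z‖^2 := by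
          exact div_le_div_of_nonneg_right (by linarith) (by positivity)
      _ = _ := by ring

lemma neg_inv_meas : Measurable (fun z : ℂ => -(z⁻¹.re)) := by fun_prop

lemma neg_inv_nonneg (z : ℂ) (hz : z.re ≤ 0) : 0 ≤ -(z⁻¹.re) := by
  rw [neg_inv_re]; exact div_nonneg (by linarith) (by positivity)

lemma reduction (ν : Measure ℂ) [IsFiniteMeasure ν] (hre : ∀ᵐ z ∂ν, z.re ≤ 0) (hne : ∀ᵐ z ∂ν, z ≠ 0)
    (hs : varsigmaSq ν < ⊤) :
    Tendsto (fun T : ℝ => VarCt ν T / T - Wf (muC ν) T) atTop (𝓝 (varsigmaSq ν).toReal) := by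
  have hnn : 0 ≤ᵐ[ν] fun z => -(z⁻¹.re) := by
    filter_upwards [hre] with z hz using neg_inv_nonneg z hz
  have hI : Integrable (fun z : ℂ => -(z⁻¹.re)) ν := by
    rw [← lintegral_ofReal_ne_top_iff_integrable neg_inv_meas.aestronglyMeasurable hnn]
    intro h
    unfold varsigmaSq at hs
    rw [h] at hs
    simp at hs
  have hval : (varsigmaSq ν).toReal = ∫ z, 2 * (-(z⁻¹.re)) ∂ν := by
    rw [integral_const_mul, integral_eq_lintegral_of_nonneg_ae hnn neg_inv_meas.aestronglyMeasurable, varsigmaSq]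
    simp
  rw [hval]
  have : Tendsto (fun T : ℝ => ∫ z, (2 * T * (Gk (z * T)).re - Qc.indicator (fun z => T * Real.sinc (z.im * T / 2)^2) z) ∂ν) atTop
      (𝓝 (∫ z, 2 * (-(z⁻¹.re)) ∂ν)) := by
    refine tendsto_integral_filter_of_dominated_convergence (fun z => 32 * (-(z⁻¹.re))) ?_ ?_ (hI.const_mul 32) ?_
    · exact Eventually.of_forall fun T => ((Gk_meas T).sub (ind_meas_s15 T)).aestronglyMeasurable
    · filter_upwards [eventually_gt_atTop 0] with T hT
      filter_upwards [hre, hne] with z h1 h2 using F_bound z h1 h2 T hT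
    · filter_upwards [hre, hne] with z h1 h2
      simpa using (Gk_pointwise z h1 h2).sub (ind_pointwise z h2)
  refine this.congr' ?_
  filter_upwards [eventually_gt_atTop 0] with T hT
  rw [integral_sub (Gk_int ν hre T hT) (ind_int ν T hT), VarCt_div ν T hT, Wf_muC ν T hT]

lemma sigma_finite' (ν : Measure ℂ) [IsFiniteMeasure ν] (hre : ∀ᵐ z ∂ν, z.re ≤ 0) (hne : ∀ᵐ z ∂ν, z ≠ 0)
    (L : ℝ) (hL : Tendsto (fun T : ℝ => VarCt ν T / T) atTop (𝓝 L)) : varsigmaSq ν < ⊤ := by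
  have h1 : ∫⁻ z, ENNReal.ofReal (2 * (-(z⁻¹.re))) ∂ν ≤ ENNReal.ofReal L := by
    have hf : ∀ n : ℕ, Measurable (fun z : ℂ => ENNReal.ofReal (2 * (n:ℝ) * (Gk (z * ((n:ℝ):ℂ))).re)) := fun n =>
      (Gk_meas n).ennreal_ofReal
    have hfat := lintegral_liminf_le (u := atTop) hf (μ := ν)
    calc ∫⁻ z, ENNReal.ofReal (2 * (-(z⁻¹.re))) ∂ν
        = ∫⁻ z, liminf (fun n : ℕ => ENNReal.ofReal (2 * (n:ℝ) * (Gk (z * ((n:ℝ):ℂ))).re)) atTop ∂ν := by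
          refine lintegral_congr_ae ?_
          filter_upwards [hre, hne] with z hz hz0
          refine (Tendsto.liminf_eq ?_).symm
          exact ENNReal.tendsto_ofReal ((Gk_pointwise z hz hz0).comp tendsto_natCast_atTop_atTop)
      _ ≤ liminf (fun n : ℕ => ∫⁻ z, ENNReal.ofReal (2 * (n:ℝ) * (Gk (z * ((n:ℝ):ℂ))).re) ∂ν) atTop := hfat
      _ = liminf (fun n : ℕ => ENNReal.ofReal (VarCt ν n / n)) atTop := by
          refine liminf_congr ?_
          filter_upwards [eventually_gt_atTop 0] with n hn
          have hn : (0:ℝ) < n := by exact_mod_cast hn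
          rw [VarCt_div ν n hn, ofReal_integral_eq_lintegral_ofReal (Gk_int ν hre n hn)]
          filter_upwards [hre] with z hz
          have := Gk_nonneg _ (mulT_re z n hn hz)
          simp only [Pi.zero_apply]
          positivity
      _ = ENNReal.ofReal L := 
          (ENNReal.tendsto_ofReal (hL.comp tendsto_natCast_atTop_atTop)).liminf_eq
  have h2 : varsigmaSq ν = ∫⁻ z, ENNReal.ofReal (2 * (-(z⁻¹.re))) ∂ν := by
    simp_rw [ENNReal.ofReal_mul zero_le_two]
    rw [lintegral_const_mul _ neg_inv_meas.ennreal_ofReal, varsigmaSq]; simp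
  rw [h2]; exact h1.trans_lt ENNReal.ofReal_lt_top

/-- **Theorem 3.2 (first part).**  Let `ν` be a finite conjugation-invariant
measure on the closed left half-plane with `ν({0}) = 0`.  Then `Var(T)/T`
converges to a finite limit `L` as `T → ∞` iff `ς² < ∞` and `ν(U_x)/x → C`
as `x → 0⁺` for some `C ≥ 0`; and in that case `L = ς² + πC`. -/
theorem continuous_time_linear_variance_iff
    (ν : Measure ℂ) [IsFiniteMeasure ν]
    (hsupp : ν {z : ℂ | ¬ z.re ≤ 0} = 0)
    (h0 : ν {(0 : ℂ)} = 0)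
    (hconj : ∀ A : Set ℂ, MeasurableSet A → ν ((starRingEnd ℂ) ⁻¹' A) = ν A) :
    ((∃ L : ℝ, Tendsto (fun T : ℝ => VarCt ν T / T) atTop (𝓝 L)) ↔
      (varsigmaSq ν < ⊤ ∧ ∃ C : ℝ, 0 ≤ C ∧
        Tendsto (fun x : ℝ => (ν (UsetCt x)).toReal / x) (𝓝[>] (0:ℝ)) (𝓝 C))) ∧
    ∀ L C : ℝ, Tendsto (fun T : ℝ => VarCt ν T / T) atTop (𝓝 L) →
      Tendsto (fun x : ℝ => (ν (UsetCt x)).toReal / x) (𝓝[>] (0:ℝ)) (𝓝 C) →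
      L = (varsigmaSq ν).toReal + Real.pi * C := by
  have hre : ∀ᵐ z ∂ν, z.re ≤ 0 := hsupp
  have hne : ∀ᵐ z ∂ν, z ≠ 0 := measure_eq_zero_iff_ae_notMem.1 h0
  have hm0 := muC_zero ν h0
  have hU : ∀ x : ℝ, (muC ν).real (Iic x) = (ν (UsetCt x)).toReal := fun x => by
    rw [measureReal_def, muC_Iic]
  have fwd : ∀ L : ℝ, Tendsto (fun T : ℝ => VarCt ν T / T) atTop (𝓝 L) →
      Tendsto (fun x : ℝ => (ν (UsetCt x)).toReal / x) (𝓝[>] (0:ℝ))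
        (𝓝 ((L - (varsigmaSq ν).toReal) / Real.pi)) := by
    intro L hL
    have h1 := hL.sub (reduction ν hre hne (sigma_finite' ν hre hne L hL))
    simp only [sub_sub_cancel] at h1
    have h2 := tauberian (muC ν) hm0 _ h1
    simpa only [hU] using h2
  refine ⟨⟨?_, ?_⟩, ?_⟩
  · rintro ⟨L, hL⟩
    refine ⟨sigma_finite' ν hre hne L hL, _, ?_, fwd L hL⟩
    refine ge_of_tendsto (fwd L hL) ?_
    filter_upwards [self_mem_nhdsWithin] with x hx
    have hx : 0 < x := hx
    positivity
  · rintro ⟨hs, C, -, hC⟩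
    obtain ⟨K, hK⟩ := abelian_s15 (muC ν) hm0 C (by simpa only [hU] using hC)
    have h1 := (reduction ν hre hne hs).add hK
    exact ⟨_, by simpa only [sub_add_cancel] using h1⟩
  · intro L C hL hC
    have h := tendsto_nhds_unique hC (fwd L hL)
    rw [h]; field_simp; ring
end
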